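/- arXiv:2407.21175 — 4 statements merged into one kernel-verified Lean document; each statement's English description precedes it below -/
import Mathlib

section
/- The ring Z(n) is semiprime: for every nonzero element a of Z(n) there exists r ∈ Z(n) such that a·r·a ≠ 0. -/
/-- Index type for the generators `z_{i,j}`, `1 ≤ i < j ≤ n`. -/
abbrev ZIdx (n : ℕ) := {p : ℕ × ℕ // 1 ≤ p.1 ∧ p.1 < p.2 ∧ p.2 ≤ n}

/-- The element `z_{i,j}` of the free algebra, with the conventions
`z_{a,b} = (-1)^(a-b) z_{b,a}` for `a > b` and `z_{a,a} = 1`. -/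
noncomputable def zf (n : ℕ) (i j : ℕ) : FreeAlgebra ℤ (ZIdx n) :=
  if h : 1 ≤ i ∧ i < j ∧ j ≤ n then FreeAlgebra.ι ℤ ⟨(i, j), h⟩
  else if h : 1 ≤ j ∧ j < i ∧ i ≤ n then ((-1 : ℤ) ^ (i - j)) • FreeAlgebra.ι ℤ ⟨(j, i), h⟩
  else if i = j then 1 else 0

/-- The defining relations of the ring `Z(n)`. -/
inductive ZRel (n : ℕ) : FreeAlgebra ℤ (ZIdx n) → FreeAlgebra ℤ (ZIdx n) → Prop
  | contain (i j i' j' : ℕ) (h1 : 1 ≤ i) (h2 : i < j) (h3 : j ≤ n)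
      (h1' : 1 ≤ i') (h2' : i' < j') (h3' : j' ≤ n)
      (hsub : Set.Icc i' j' ⊆ Set.Icc i j) :
      ZRel n (zf n i j * zf n i' j')
        (((-1 : ℤ) ^ ((j - i) * (j' - i'))) • (zf n (i + j - i') (i + j - j') * zf n i j))
  | disj (i j i' j' : ℕ) (h1 : 1 ≤ i) (h2 : i < j) (h3 : j ≤ n)
      (h1' : 1 ≤ i') (h2' : i' < j') (h3' : j' ≤ n)
      (hd : Set.Icc i j ∩ Set.Icc i' j' = ∅) :
      ZRel n (zf n i j * zf n i' j')
        (((-1 : ℤ) ^ ((j - i) * (j' - i'))) • (zf n i' j' * zf n i j))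
  | overlap (i j i' j' : ℕ) (h1 : 1 ≤ i) (h2 : i < j) (h3 : j ≤ n)
      (h1' : 1 ≤ i') (h2' : i' < j') (h3' : j' ≤ n)
      (hne : (Set.Icc i j ∩ Set.Icc i' j').Nonempty)
      (hnc1 : ¬ Set.Icc i' j' ⊆ Set.Icc i j) (hnc2 : ¬ Set.Icc i j ⊆ Set.Icc i' j') :
      ZRel n (zf n i j * zf n i' j') 0

/-- The ring `Z(n)`. -/
abbrev Zring (n : ℕ) := RingQuot (ZRel n)

/-- The image of the generator `z_{i,j}` in `Z(n)`. -/
noncomputable def zElem (n : ℕ) (i j : ℕ) : Zring n :=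
  RingQuot.mkRingHom (ZRel n) (zf n i j)

/-!
The relations say how a letter moves past another, so `Z(n)` is spanned by normal words, whose
letters are listed by decreasing size, and a normal word with two incompatible letters is zero.

To see that the other words do not vanish, let `z_{i,j}` act on `ℕ` by reversing `[i, j]`, and label
each letter of a word by its support pulled back along the letters to its right. The relations
preserve the multiset of labels, and `Z(n)` acts on pairs of a permutation and a laminar multiset of
labels: a letter composes the permutation with its reversal and adds its label, with a sign. So
words with different laminar multisets of labels are linearly independent.

Let `z` be the letters of a nonzero normal word occurring in `a`. Take for `r` the reverse of that
word, which cancels its permutation, preceded by even powers of the letters of `z` with huge and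
distinct exponents. If `x r y`, for normal words `x` and `y`, has the labels of such a product in
which all labels are letters of `z`, the exponents force all labels to be in place, so that the
labels of `x r y` determine the multiset of all letters of `x` and `y`. As the multisets with
addition form a monoid with unique sums, some pair `(x, y)` is determined by its labels, so its term
in `a r a` does not cancel.
-/

open scoped Pointwise Finset
open Finset.Colex

namespace Zring

/-! ### Laminar multisets -/

/-- `A` dominates `B` if `B` is contained in `A` or disjoint from it. For intervals this is when the
reversal of `A` sends `B` to an interval. -/
def Dominates (A B : Finset ℕ) : Prop := B ⊆ A ∨ Disjoint A B

/-- Two sets are compatible if they are nested or disjoint. -/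
def Compatible (A B : Finset ℕ) : Prop := Dominates A B ∨ Dominates B A

/-- A multiset of sets is laminar if its members are pairwise compatible. -/
def Laminar (m : Multiset (Finset ℕ)) : Prop := ∀ A ∈ m, ∀ B ∈ m, Compatible A B

theorem Dominates.refl (A : Finset ℕ) : Dominates A A := .inl (Finset.Subset.refl A)

theorem Compatible.symm {A B : Finset ℕ} (h : Compatible A B) : Compatible B A := Or.symm h

theorem Compatible.dominates_of_card_le {A B : Finset ℕ} (h : Compatible A B) (hcard : #B ≤ #A) :
    Dominates A B := by
  rcases h with h | hAB | hdisj
  · exact h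
  · exact .inl (Finset.eq_of_subset_of_card_le hAB hcard).ge
  · exact .inr hdisj.symm

theorem dominates_smul (σ : Equiv.Perm ℕ) (A B : Finset ℕ) :
    Dominates (σ • A) (σ • B) ↔ Dominates A B := by
  simp only [Dominates, Finset.smul_finset_subset_smul_finset_iff, ← Finset.disjoint_coe,
    Finset.coe_smul_finset, Set.disjoint_smul_set]

theorem compatible_smul (σ : Equiv.Perm ℕ) (A B : Finset ℕ) :
    Compatible (σ • A) (σ • B) ↔ Compatible A B :=
  or_congr (dominates_smul σ A B) (dominates_smul σ B A)

theorem laminar_zero : Laminar 0 := fun A hA => absurd hA (Multiset.notMem_zero A)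

theorem Laminar.mono {m m' : Multiset (Finset ℕ)} (h : Laminar m') (hle : m ≤ m') : Laminar m :=
  fun A hA B hB => h A (Multiset.mem_of_le hle hA) B (Multiset.mem_of_le hle hB)

theorem Laminar.of_map_smul {σ : Equiv.Perm ℕ} {m : Multiset (Finset ℕ)}
    (h : Laminar (m.map (σ • ·))) : Laminar m :=
  fun A hA B hB => (compatible_smul σ A B).1
    (h _ (Multiset.mem_map_of_mem _ hA) _ (Multiset.mem_map_of_mem _ hB))

instance {α : Type*} : UniqueSums (Multiset α) := by
  classical
  exact UniqueSums.of_injective_addHom (Multiset.toFinsupp : Multiset α ≃+ (α →₀ ℕ)).toAddHom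
    Multiset.toFinsupp.injective inferInstance

theorem apply_eq_self_of_add_map_eq_add {α : Type*} [DecidableEq α] {f : α → α} (hf : f.Injective)
    {s s' E : Multiset α} {N : ℕ} (hs : s.card < N) (hs' : s'.card < N)
    {c : α → ℕ} (hc : c.Injective) (hE : ∀ a ∈ E, E.count a = N * c a)
    (h : s + E.map f = s' + E) : ∀ a ∈ E, f a = a := by
  intro a ha
  -- `s` and `s'` are too small to affect the multiplicities divided by `N`, which determine `a`.
  have hcount : s.count (f a) + N * c a = s'.count (f a) + E.count (f a) := by
    simpa only [Multiset.count_add, Multiset.count_map_eq_count' f E hf, hE a ha] using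
      congrArg (Multiset.count (f a)) h
  have hlt : s.count (f a) < N := (Multiset.count_le_card _ _).trans_lt hs
  have hlt' : s'.count (f a) < N := (Multiset.count_le_card _ _).trans_lt hs'
  have hfa : f a ∈ E := by
    by_contra hfa
    have hpos : 0 < N * c a := hE a ha ▸ Multiset.count_pos.2 ha
    rw [Multiset.count_eq_zero_of_notMem hfa] at hcount
    have := Nat.le_mul_of_pos_right N (Nat.pos_of_mul_pos_left hpos)
    omega
  rw [hE _ hfa] at hcount
  have hdiv := congrArg (· / N) hcount
  simp only [Nat.add_mul_div_left _ _ (hs.trans_le' (Nat.zero_le _)), Nat.div_eq_of_lt hlt,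
    Nat.div_eq_of_lt hlt', zero_add] at hdiv
  exact (hc hdiv).symm

/-! ### Signs -/

/-- The exponent of `-1` picked up when a letter with support `A` is moved from left to right past
one with support `B`, which `A` dominates. -/
def exchangeExp (A B : Finset ℕ) : ℕ := (#A - 1) * (#B - 1) + if B ⊆ A then #B - 1 else 0

theorem exchangeExp_smul (σ : Equiv.Perm ℕ) (A B : Finset ℕ) :
    exchangeExp (σ • A) (σ • B) = exchangeExp A B := by
  simp only [exchangeExp, Finset.card_smul_finset, Finset.smul_finset_subset_smul_finset_iff]

theorem even_exchangeExp_self (A : Finset ℕ) : Even (exchangeExp A A) := by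
  simpa only [exchangeExp, Finset.Subset.refl, if_true, mul_add_one] using
    Nat.even_mul_succ_self (#A - 1)

theorem exchangeExp_of_disjoint {A B : Finset ℕ} (h : Disjoint A B) :
    exchangeExp A B = (#A - 1) * (#B - 1) := by
  rw [exchangeExp, add_eq_left]
  split_ifs with hBA
  · rw [disjoint_self.1 (h.mono_left hBA), Finset.bot_eq_empty, Finset.card_empty,
      Nat.zero_sub]
  · rfl

/-- The exponent of `-1` picked up when the label `B` is inserted into a multiset containing `A`, if
labels are listed in colexicographic order. -/
def insertExp (A B : Finset ℕ) : ℕ := if toColex A ≤ toColex B then exchangeExp B A else 0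

theorem neg_one_pow_insertExp {A B : Finset ℕ} (h : Dominates A B) :
    (-1 : ℤ) ^ insertExp B A = (-1) ^ exchangeExp A B * (-1) ^ insertExp A B := by
  rcases lt_trichotomy (toColex A) (toColex B) with hlt | heq | hgt
  · have hdisj : Disjoint A B := h.resolve_left fun hBA => hlt.not_ge (toColex_mono hBA)
    rw [insertExp, if_neg hlt.not_ge, insertExp, if_pos hlt.le, exchangeExp_of_disjoint hdisj,
      exchangeExp_of_disjoint hdisj.symm, mul_comm (#B - 1), ← mul_pow, neg_one_mul, neg_neg,
      one_pow, pow_zero]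
  · obtain rfl := toColex_inj.1 heq
    rw [(even_exchangeExp_self A).neg_one_pow, one_mul]
  · rw [insertExp, if_pos hgt.le, insertExp, if_neg hgt.not_ge, pow_zero, mul_one]

/-- The sign picked up when the label `A` is inserted into the multiset `m`. -/
def insertSign (A : Finset ℕ) (m : Multiset (Finset ℕ)) : ℤ :=
  (m.map fun B => (-1) ^ insertExp B A).prod

theorem insertSign_cons (A B : Finset ℕ) (m : Multiset (Finset ℕ)) :
    insertSign A (B ::ₘ m) = (-1) ^ insertExp B A * insertSign A m := by
  rw [insertSign, Multiset.map_cons, Multiset.prod_cons, insertSign]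

theorem insertSign_ne_zero (A : Finset ℕ) (m : Multiset (Finset ℕ)) : insertSign A m ≠ 0 :=
  Multiset.prod_ne_zero fun h => by
    obtain ⟨B, -, hB⟩ := Multiset.mem_map.1 h
    exact pow_ne_zero _ (by norm_num) hB

end Zring

namespace ZIdx

/-! ### Reversals of intervals -/

open Zring

variable {n : ℕ}

/-- The set of integers in the interval `I`. -/
def supp (I : ZIdx n) : Finset ℕ := Finset.Icc I.1.1 I.1.2

theorem mem_supp {I : ZIdx n} {x : ℕ} : x ∈ I.supp ↔ I.1.1 ≤ x ∧ x ≤ I.1.2 := Finset.mem_Icc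

theorem coe_supp (I : ZIdx n) : (I.supp : Set ℕ) = Set.Icc I.1.1 I.1.2 := Finset.coe_Icc _ _

theorem supp_nonempty (I : ZIdx n) : I.supp.Nonempty := Finset.nonempty_Icc.2 I.2.2.1.le

theorem supp_subset_supp {I J : ZIdx n} :
    J.supp ⊆ I.supp ↔ I.1.1 ≤ J.1.1 ∧ J.1.2 ≤ I.1.2 :=
  Finset.Icc_subset_Icc_iff J.2.2.1.le

theorem card_supp (I : ZIdx n) : #I.supp = I.1.2 + 1 - I.1.1 := Nat.card_Icc _ _

theorem card_supp_sub_one (I : ZIdx n) : #I.supp - 1 = I.1.2 - I.1.1 := by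
  rw [card_supp, Nat.succ_sub I.2.2.1.le, Nat.succ_sub_one]

theorem supp_injective : Function.Injective (supp : ZIdx n → Finset ℕ) := by
  intro I J h
  have hIJ := supp_subset_supp.1 h.subset
  have hJI := supp_subset_supp.1 h.symm.subset
  exact Subtype.ext (Prod.ext (by omega) (by omega))

/-- The permutation of `ℕ` reversing the interval `I` and fixing every other number. -/
def rev (I : ZIdx n) : Equiv.Perm ℕ :=
  Function.Involutive.toPerm (fun x => if x ∈ I.supp then I.1.1 + I.1.2 - x else x) (by
    intro x
    simp only [mem_supp]
    split_ifs <;> omega)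

theorem rev_apply_of_mem {I : ZIdx n} {x : ℕ} (hx : x ∈ I.supp) :
    I.rev x = I.1.1 + I.1.2 - x := if_pos hx

theorem rev_apply_of_notMem {I : ZIdx n} {x : ℕ} (hx : x ∉ I.supp) : I.rev x = x := if_neg hx

theorem rev_apply_mem_supp {I : ZIdx n} {x : ℕ} (hx : x ∈ I.supp) : I.rev x ∈ I.supp := by
  rw [rev_apply_of_mem hx]
  rw [mem_supp] at hx ⊢
  omega

theorem rev_inv (I : ZIdx n) : I.rev⁻¹ = I.rev := rfl

theorem rev_mul_self (I : ZIdx n) : I.rev * I.rev = 1 := mul_eq_one_iff_eq_inv.2 I.rev_inv.symm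

theorem rev_smul_rev_smul (I : ZIdx n) (A : Finset ℕ) : I.rev • I.rev • A = A := by
  rw [smul_smul, rev_mul_self, one_smul]

theorem mem_rev_smul {I : ZIdx n} {A : Finset ℕ} {x : ℕ} : x ∈ I.rev • A ↔ I.rev x ∈ A := by
  rw [← rev_inv, Finset.mem_inv_smul_finset_iff, rev_inv, Equiv.Perm.smul_def]

theorem rev_smul_of_dominates {A : Finset ℕ} {I : ZIdx n} (h : Dominates A I.supp) :
    I.rev • A = A := by
  ext x
  rw [mem_rev_smul]
  by_cases hx : x ∈ I.supp
  · rcases h with h | h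
    · exact iff_of_true (h (rev_apply_mem_supp hx)) (h hx)
    · exact iff_of_false (Finset.disjoint_right.1 h (rev_apply_mem_supp hx))
        (Finset.disjoint_right.1 h hx)
  · rw [rev_apply_of_notMem hx]

/-- The image of `J` under the reversal of `I` if `J` is contained in `I`; otherwise `J` itself. -/
def reflect (I J : ZIdx n) : ZIdx n :=
  if h : J.supp ⊆ I.supp then
    ⟨(I.1.1 + I.1.2 - J.1.2, I.1.1 + I.1.2 - J.1.1), by
      have := I.2
      have := J.2
      have hJI := supp_subset_supp.1 h
      dsimp only
      omega⟩
  else J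

theorem reflect_of_disjoint {I J : ZIdx n} (h : Disjoint I.supp J.supp) : I.reflect J = J :=
  dif_neg fun hJI => J.supp_nonempty.ne_empty (disjoint_self.1 (h.mono_left hJI))

theorem supp_reflect {I J : ZIdx n} (h : Dominates I.supp J.supp) :
    (I.reflect J).supp = I.rev • J.supp := by
  rcases h with h | h
  · have := I.2
    have := J.2
    have hJI := supp_subset_supp.1 h
    ext x
    rw [mem_rev_smul, reflect, dif_pos h]
    by_cases hx : x ∈ I.supp
    · rw [rev_apply_of_mem hx]
      rw [mem_supp] at hx
      simp only [mem_supp]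
      omega
    · rw [rev_apply_of_notMem hx]
      simp only [mem_supp] at hx ⊢
      omega
  · rw [reflect_of_disjoint h, rev_smul_of_dominates (.inr h.symm)]

theorem dominates_reflect {I J : ZIdx n} (h : Dominates I.supp J.supp) :
    Dominates I.supp (I.reflect J).supp := by
  rwa [supp_reflect h, ← dominates_smul I.rev, rev_smul_rev_smul, rev_smul_of_dominates (.refl _)]

theorem reflect_reflect {I J : ZIdx n} (h : Dominates I.supp J.supp) :
    I.reflect (I.reflect J) = J := by
  refine supp_injective ?_
  rw [supp_reflect (dominates_reflect h), supp_reflect h, rev_smul_rev_smul]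

theorem rev_mul_rev {I J : ZIdx n} (h : Dominates I.supp J.supp) :
    I.rev * J.rev = (I.reflect J).rev * I.rev := by
  ext x
  have hmem : I.rev x ∈ (I.reflect J).supp ↔ x ∈ J.supp := by
    rw [supp_reflect h, mem_rev_smul, ← Equiv.Perm.mul_apply, rev_mul_self, Equiv.Perm.one_apply]
  simp only [Equiv.Perm.mul_apply]
  by_cases hx : x ∈ J.supp
  · rw [rev_apply_of_mem (hmem.2 hx), rev_apply_of_mem hx]
    rcases h with h | h
    · have hxI := h hx
      have hJ := rev_apply_mem_supp hx
      rw [rev_apply_of_mem hx] at hJ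
      rw [rev_apply_of_mem (h hJ), rev_apply_of_mem hxI, reflect, dif_pos h]
      rw [mem_supp] at hx hxI
      dsimp only
      have := supp_subset_supp.1 h
      omega
    · have hJ := rev_apply_mem_supp hx
      rw [rev_apply_of_mem hx] at hJ
      rw [reflect_of_disjoint h, rev_apply_of_notMem (Finset.disjoint_right.1 h hJ),
        rev_apply_of_notMem (Finset.disjoint_right.1 h hx)]
  · rw [rev_apply_of_notMem hx, rev_apply_of_notMem (hmem.not.2 hx)]

end ZIdx

namespace Zring

/-! ### The presentation -/

open ZIdx

variable {n : ℕ}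

theorem zf_eq_ι (I : ZIdx n) : zf n I.1.1 I.1.2 = FreeAlgebra.ι ℤ I := dif_pos I.2

theorem zf_eq_ι_reflect {I J : ZIdx n} (h : J.supp ⊆ I.supp) :
    zf n (I.1.1 + I.1.2 - J.1.1) (I.1.1 + I.1.2 - J.1.2) =
      (-1 : ℤ) ^ (#J.supp - 1) • FreeAlgebra.ι ℤ (I.reflect J) := by
  have := I.2
  have := J.2
  have hJI := supp_subset_supp.1 h
  rw [zf, dif_neg (by omega), dif_pos (by omega), card_supp]
  simp only [reflect, dif_pos h]
  congr 2
  omega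

theorem zrel_contain_rhs {I J : ZIdx n} (h : J.supp ⊆ I.supp) :
    (-1 : ℤ) ^ ((I.1.2 - I.1.1) * (J.1.2 - J.1.1)) •
        (zf n (I.1.1 + I.1.2 - J.1.1) (I.1.1 + I.1.2 - J.1.2) * zf n I.1.1 I.1.2) =
      (-1 : ℤ) ^ exchangeExp I.supp J.supp •
        (FreeAlgebra.ι ℤ (I.reflect J) * FreeAlgebra.ι ℤ I) := by
  rw [zf_eq_ι_reflect h, zf_eq_ι, smul_mul_assoc, smul_smul, ← pow_add, exchangeExp, if_pos h,
    card_supp_sub_one, card_supp_sub_one]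

theorem zrel_disj_rhs {I J : ZIdx n} (h : Disjoint I.supp J.supp) :
    (-1 : ℤ) ^ ((I.1.2 - I.1.1) * (J.1.2 - J.1.1)) • (zf n J.1.1 J.1.2 * zf n I.1.1 I.1.2) =
      (-1 : ℤ) ^ exchangeExp I.supp J.supp •
        (FreeAlgebra.ι ℤ (I.reflect J) * FreeAlgebra.ι ℤ I) := by
  rw [zf_eq_ι, zf_eq_ι, reflect_of_disjoint h, exchangeExp, if_neg, add_zero,
    card_supp_sub_one, card_supp_sub_one]
  exact fun hJI => J.supp_nonempty.ne_empty (disjoint_self.1 (h.mono_left hJI))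

theorem Icc_subset_iff {I J : ZIdx n} :
    Set.Icc J.1.1 J.1.2 ⊆ Set.Icc I.1.1 I.1.2 ↔ J.supp ⊆ I.supp := by
  rw [← coe_supp, ← coe_supp, Finset.coe_subset]

theorem Icc_inter_eq_empty_iff {I J : ZIdx n} :
    Set.Icc I.1.1 I.1.2 ∩ Set.Icc J.1.1 J.1.2 = ∅ ↔ Disjoint I.supp J.supp := by
  rw [← coe_supp, ← coe_supp, ← Set.disjoint_iff_inter_eq_empty, Finset.disjoint_coe]

theorem zrel_iff {x y : FreeAlgebra ℤ (ZIdx n)} :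
    ZRel n x y ↔ ∃ I J : ZIdx n, x = FreeAlgebra.ι ℤ I * FreeAlgebra.ι ℤ J ∧
      (Dominates I.supp J.supp ∧ y = (-1 : ℤ) ^ exchangeExp I.supp J.supp •
          (FreeAlgebra.ι ℤ (I.reflect J) * FreeAlgebra.ι ℤ I) ∨
        ¬ Compatible I.supp J.supp ∧ y = 0) := by
  constructor
  · rintro (⟨i, j, i', j', hi, hij, hj, hi', hij', hj', hsub⟩ |
      ⟨i, j, i', j', hi, hij, hj, hi', hij', hj', hdisj⟩ |
      ⟨i, j, i', j', hi, hij, hj, hi', hij', hj', hne, hsub, hsup⟩)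
    all_goals
      let I : ZIdx n := ⟨(i, j), hi, hij, hj⟩
      let J : ZIdx n := ⟨(i', j'), hi', hij', hj'⟩
      refine ⟨I, J, congrArg₂ _ (zf_eq_ι I) (zf_eq_ι J), ?_⟩
    · have h : J.supp ⊆ I.supp := Icc_subset_iff.1 hsub
      exact .inl ⟨.inl h, zrel_contain_rhs h⟩
    · have h : Disjoint I.supp J.supp := Icc_inter_eq_empty_iff.1 hdisj
      exact .inl ⟨.inr h, zrel_disj_rhs h⟩
    · refine .inr ⟨?_, rfl⟩
      rintro ((h | h) | (h | h))
      · exact hsub (Icc_subset_iff.2 h)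
      · exact hne.ne_empty (Icc_inter_eq_empty_iff.2 h)
      · exact hsup (Icc_subset_iff.2 h)
      · exact hne.ne_empty (Icc_inter_eq_empty_iff.2 h.symm)
  · rintro ⟨I, J, rfl, ⟨h | h, rfl⟩ | ⟨h, rfl⟩⟩
    all_goals
      obtain ⟨hi, hij, hj⟩ := I.2
      obtain ⟨hi', hij', hj'⟩ := J.2
    · rw [← zrel_contain_rhs h, ← zf_eq_ι I, ← zf_eq_ι J]
      exact .contain _ _ _ _ hi hij hj hi' hij' hj' (Icc_subset_iff.2 h)
    · rw [← zrel_disj_rhs h, ← zf_eq_ι I, ← zf_eq_ι J]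
      exact .disj _ _ _ _ hi hij hj hi' hij' hj' (Icc_inter_eq_empty_iff.2 h)
    · rw [← zf_eq_ι I, ← zf_eq_ι J]
      refine .overlap _ _ _ _ hi hij hj hi' hij' hj'
        (Set.nonempty_iff_ne_empty.2 fun hempty => h ?_) (fun hsub => h ?_) (fun hsup => h ?_)
      · exact .inl (.inr (Icc_inter_eq_empty_iff.1 hempty))
      · exact .inl (.inl (Icc_subset_iff.1 hsub))
      · exact .inr (.inl (Icc_subset_iff.1 hsup))

/-- The generator `z_{i,j}` of `Z(n)` attached to the interval `I = [i, j]`. -/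
noncomputable def gen (I : ZIdx n) : Zring n := zElem n I.1.1 I.1.2

theorem mkRingHom_ι (I : ZIdx n) :
    RingQuot.mkRingHom (ZRel n) (FreeAlgebra.ι ℤ I) = gen I := by
  rw [gen, zElem, zf_eq_ι]

theorem gen_mul_gen_of_dominates {I J : ZIdx n} (h : Dominates I.supp J.supp) :
    gen I * gen J = (-1 : ℤ) ^ exchangeExp I.supp J.supp • (gen (I.reflect J) * gen I) := by
  simpa only [map_mul, map_zsmul, mkRingHom_ι] using
    RingQuot.mkRingHom_rel (zrel_iff.2 ⟨I, J, rfl, .inl ⟨h, rfl⟩⟩)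

theorem gen_mul_gen_of_not_compatible {I J : ZIdx n} (h : ¬ Compatible I.supp J.supp) :
    gen I * gen J = 0 := by
  simpa only [map_mul, map_zero, mkRingHom_ι] using
    RingQuot.mkRingHom_rel (zrel_iff.2 ⟨I, J, rfl, .inr ⟨h, rfl⟩⟩)

/-- The universal property of `Z(n)`: a map of the generators to a ring extends to `Z(n)` if it
respects the relations. -/
noncomputable def lift {R : Type*} [Ring R] (f : ZIdx n → R)
    (hdom : ∀ I J : ZIdx n, Dominates I.supp J.supp →
      f I * f J = (-1 : ℤ) ^ exchangeExp I.supp J.supp • (f (I.reflect J) * f I))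
    (hcomp : ∀ I J : ZIdx n, ¬ Compatible I.supp J.supp → f I * f J = 0) : Zring n →+* R :=
  RingQuot.lift ⟨(FreeAlgebra.lift ℤ f : FreeAlgebra ℤ (ZIdx n) →+* R), by
    intro x y hxy
    obtain ⟨I, J, rfl, ⟨h, rfl⟩ | ⟨h, rfl⟩⟩ := zrel_iff.1 hxy
    · simpa only [RingHom.coe_coe, map_mul, map_zsmul, FreeAlgebra.lift_ι_apply] using hdom I J h
    · simpa only [RingHom.coe_coe, map_mul, map_zero, FreeAlgebra.lift_ι_apply] using hcomp I J h⟩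

theorem lift_gen {R : Type*} [Ring R] {f : ZIdx n → R} {hdom hcomp} (I : ZIdx n) :
    lift f hdom hcomp (gen I) = f I := by
  simp only [← mkRingHom_ι, lift, RingQuot.lift_mkRingHom_apply, RingHom.coe_coe,
    FreeAlgebra.lift_ι_apply]

/-! ### Normal words -/

/-- The order of letters in normal words: larger intervals come first, and intervals of the same
size are ordered from left to right. -/
def LongerFirst (I J : ZIdx n) : Prop :=
  #J.supp < #I.supp ∨ #J.supp = #I.supp ∧ I.1.1 ≤ J.1.1

theorem LongerFirst.card_le {I J : ZIdx n} (h : LongerFirst I J) : #J.supp ≤ #I.supp :=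
  h.elim le_of_lt fun h => h.1.le

instance : DecidableRel (LongerFirst (n := n)) := fun I J => by unfold LongerFirst; infer_instance

instance : IsTrans (ZIdx n) LongerFirst := ⟨fun I J K h h' => by unfold LongerFirst at *; omega⟩

instance : Std.Total (LongerFirst (n := n)) := ⟨fun I J => by unfold LongerFirst; omega⟩

instance : Std.Antisymm (LongerFirst (n := n)) := ⟨fun I J h h' => by
  have := I.2
  have := J.2
  simp only [LongerFirst, card_supp] at h h'
  exact Subtype.ext (Prod.ext (by omega) (by omega))⟩

/-- The product in `Z(n)` of a list of generators. -/
noncomputable def word (L : List (ZIdx n)) : Zring n := (L.map gen).prod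

theorem word_cons (I : ZIdx n) (L : List (ZIdx n)) : word (I :: L) = gen I * word L :=
  List.prod_cons

theorem word_append (L M : List (ZIdx n)) : word (L ++ M) = word L * word M := by
  rw [word, List.map_append, List.prod_append, word, word]

theorem exists_gen_mul_gen_eq {I J : ZIdx n} (h : LongerFirst J I) :
    ∃ (c : ℤ) (I' : ZIdx n), LongerFirst J I' ∧ gen I * gen J = c • (gen J * gen I') := by
  by_cases hcomp : Compatible J.supp I.supp
  · have hdom := hcomp.dominates_of_card_le h.card_le
    refine ⟨(-1) ^ exchangeExp J.supp (J.reflect I).supp, J.reflect I, ?_, ?_⟩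
    · rcases h with hlt | heq
      · exact .inl (by rwa [supp_reflect hdom, Finset.card_smul_finset])
      · have hfix : J.reflect I = I := supp_injective <| by
          rw [supp_reflect hdom, rev_smul_of_dominates (hcomp.symm.dominates_of_card_le heq.1.ge)]
        exact .inr (hfix.symm ▸ heq)
    · rw [gen_mul_gen_of_dominates (dominates_reflect hdom), reflect_reflect hdom, smul_smul,
        ← mul_pow, neg_one_mul, neg_neg, one_pow, one_smul]
  · exact ⟨0, I, h, by rw [zero_zsmul, gen_mul_gen_of_not_compatible (mt Compatible.symm hcomp)]⟩

theorem exists_gen_mul_word_eq (I : ZIdx n) {L : List (ZIdx n)} (hL : L.Pairwise LongerFirst) :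
    ∃ (c : ℤ) (L' : List (ZIdx n)), L'.Pairwise LongerFirst ∧
      (∀ J, (∀ K ∈ I :: L, LongerFirst J K) → ∀ K ∈ L', LongerFirst J K) ∧
      gen I * word L = c • word L' := by
  induction L generalizing I with
  | nil => exact ⟨1, [I], List.pairwise_singleton _ _, fun J h => h, by rw [one_smul, word_cons]⟩
  | cons J L ih =>
    obtain ⟨hJL, hL⟩ := List.pairwise_cons.1 hL
    rcases total_of LongerFirst I J with hIJ | hJI
    · refine ⟨1, I :: J :: L, ?_, fun K h => h, by rw [one_smul, word_cons I]⟩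
      refine List.pairwise_cons.2 ⟨?_, List.pairwise_cons.2 ⟨hJL, hL⟩⟩
      exact List.forall_mem_cons.2 ⟨hIJ, fun K hK => _root_.trans hIJ (hJL K hK)⟩
    · obtain ⟨c, I', hJI', hswap⟩ := exists_gen_mul_gen_eq hJI
      obtain ⟨d, L', hL', hle, hword⟩ := ih I' hL
      have hJL' := hle J (List.forall_mem_cons.2 ⟨hJI', hJL⟩)
      refine ⟨c * d, J :: L', List.pairwise_cons.2 ⟨hJL', hL'⟩, fun K hK => ?_, ?_⟩
      · have hKJ : LongerFirst K J := hK J (List.mem_cons_of_mem _ List.mem_cons_self)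
        exact List.forall_mem_cons.2 ⟨hKJ, fun M hM => _root_.trans hKJ (hJL' M hM)⟩
      · rw [word_cons, ← mul_assoc, hswap, smul_mul_assoc, mul_assoc, hword, mul_smul_comm,
          smul_smul, word_cons]

/-- The normal word with given letters. -/
def normalWord (x : Multiset (ZIdx n)) : List (ZIdx n) := x.sort LongerFirst

theorem coe_normalWord (x : Multiset (ZIdx n)) : (normalWord x : Multiset (ZIdx n)) = x :=
  x.sort_eq LongerFirst

theorem mem_normalWord {x : Multiset (ZIdx n)} {I : ZIdx n} : I ∈ normalWord x ↔ I ∈ x :=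
  Multiset.mem_sort LongerFirst

theorem length_normalWord (x : Multiset (ZIdx n)) : (normalWord x).length = x.card :=
  Multiset.length_sort LongerFirst

theorem pairwise_normalWord (x : Multiset (ZIdx n)) : (normalWord x).Pairwise LongerFirst :=
  x.pairwise_sort LongerFirst

theorem normalWord_coe {L : List (ZIdx n)} (hL : L.Pairwise LongerFirst) :
    normalWord (L : Multiset (ZIdx n)) = L :=
  (Multiset.coe_eq_coe.1 (coe_normalWord _)).eq_of_pairwise' (pairwise_normalWord _) hL

theorem gen_mul_mem_span_normalWord (I : ZIdx n) {b : Zring n}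
    (hb : b ∈ Submodule.span ℤ (Set.range fun x : Multiset (ZIdx n) => word (normalWord x))) :
    gen I * b ∈ Submodule.span ℤ (Set.range fun x : Multiset (ZIdx n) => word (normalWord x)) := by
  induction hb using Submodule.span_induction with
  | mem _ hx =>
    obtain ⟨x, rfl⟩ := hx
    obtain ⟨c, L, hL, -, hword⟩ := exists_gen_mul_word_eq I (pairwise_normalWord x)
    rw [hword]
    refine Submodule.smul_mem _ _ (Submodule.subset_span ⟨L, ?_⟩)
    simp only [normalWord_coe hL]
  | zero => rw [mul_zero]; exact zero_mem _
  | add x y _ _ hx hy => rw [mul_add]; exact add_mem hx hy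
  | smul c x _ hx => rw [mul_smul_comm]; exact Submodule.smul_mem _ _ hx

theorem span_normalWord :
    Submodule.span ℤ (Set.range fun x : Multiset (ZIdx n) => word (normalWord x)) = ⊤ := by
  set S := Submodule.span ℤ (Set.range fun x : Multiset (ZIdx n) => word (normalWord x))
  have hmul (x : FreeAlgebra ℤ (ZIdx n)) : ∀ b ∈ S, RingQuot.mkRingHom (ZRel n) x * b ∈ S := by
    induction x using FreeAlgebra.induction with
    | grade0 r =>
      intro b hb
      rw [eq_intCast, map_intCast, ← zsmul_eq_mul]
      exact Submodule.smul_mem _ _ hb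
    | grade1 I =>
      intro b hb
      rw [mkRingHom_ι]
      exact gen_mul_mem_span_normalWord I hb
    | mul x y hx hy => intro b hb; rw [map_mul, mul_assoc]; exact hx _ (hy _ hb)
    | add x y hx hy => intro b hb; rw [map_add, add_mul]; exact add_mem (hx _ hb) (hy _ hb)
  have hone : (1 : Zring n) ∈ S :=
    Submodule.subset_span ⟨0, congrArg word (normalWord_coe List.Pairwise.nil)⟩
  refine eq_top_iff.2 fun a _ => ?_
  obtain ⟨x, rfl⟩ := RingQuot.mkRingHom_surjective (ZRel n) a
  simpa only [mul_one] using hmul x 1 hone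

theorem exists_eq_sum_normalWord (a : Zring n) :
    ∃ c : Multiset (ZIdx n) →₀ ℤ, a = ∑ x ∈ c.support, c x • word (normalWord x) := by
  obtain ⟨c, hc⟩ := (Finsupp.mem_span_range_iff_exists_finsupp (R := ℤ)).1
    (span_normalWord (n := n) ▸ Submodule.mem_top : a ∈ _)
  exact ⟨c, hc.symm⟩

theorem gen_mul_word_eq_zero {I J : ZIdx n} (h : ¬ Compatible I.supp J.supp) {L : List (ZIdx n)}
    (hJ : J ∈ L) (hL : ∀ K ∈ L, LongerFirst I K) : gen I * word L = 0 := by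
  induction L with
  | nil => exact absurd hJ List.not_mem_nil
  | cons K L ih =>
    obtain ⟨hIK, hIL⟩ := List.forall_mem_cons.1 hL
    rw [word_cons, ← mul_assoc]
    by_cases hcomp : Compatible I.supp K.supp
    · have hJL : J ∈ L := (List.mem_cons.1 hJ).resolve_left (by rintro rfl; exact h hcomp)
      rw [gen_mul_gen_of_dominates (hcomp.dominates_of_card_le hIK.card_le), smul_mul_assoc,
        mul_assoc, ih hJL hIL, mul_zero, zsmul_zero]
    · rw [gen_mul_gen_of_not_compatible hcomp, zero_mul]

theorem pairwise_compatible_of_word_ne_zero {L : List (ZIdx n)} (hL : L.Pairwise LongerFirst)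
    (hne : word L ≠ 0) : L.Pairwise fun I J => Compatible I.supp J.supp := by
  induction L with
  | nil => exact .nil
  | cons I L ih =>
    obtain ⟨hIL, hL⟩ := List.pairwise_cons.1 hL
    rw [word_cons] at hne
    refine List.pairwise_cons.2 ⟨fun J hJ => ?_, ih hL (right_ne_zero_of_mul hne)⟩
    by_contra hcomp
    exact hne (gen_mul_word_eq_zero hcomp hJ hIL)

theorem laminar_map_supp_of_word_normalWord_ne_zero {x : Multiset (ZIdx n)}
    (hne : word (normalWord x) ≠ 0) : Laminar (x.map supp) := by
  have hpair := pairwise_compatible_of_word_ne_zero (pairwise_normalWord x) hne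
  have : Std.Symm fun I J : ZIdx n => Compatible I.supp J.supp := ⟨fun _ _ h => h.symm⟩
  have hall := hpair.forall_of_forall fun I _ => .inl (.refl I.supp)
  simp only [Laminar, Multiset.mem_map]
  rintro _ ⟨I, hI, rfl⟩ _ ⟨J, hJ, rfl⟩
  exact hall (mem_normalWord.2 hI) (mem_normalWord.2 hJ)

/-! ### Labels -/

/-- The product of the reversals of the letters of a word. -/
def perm (L : List (ZIdx n)) : Equiv.Perm ℕ := (L.map rev).prod

theorem perm_nil : perm ([] : List (ZIdx n)) = 1 := rfl

theorem perm_cons (I : ZIdx n) (L : List (ZIdx n)) : perm (I :: L) = I.rev * perm L :=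
  List.prod_cons

theorem perm_append (L M : List (ZIdx n)) : perm (L ++ M) = perm L * perm M := by
  rw [perm, List.map_append, List.prod_append, perm, perm]

theorem perm_reverse (L : List (ZIdx n)) : perm L.reverse = (perm L)⁻¹ := by
  rw [perm, perm, List.prod_inv_reverse, List.map_map, List.map_reverse]
  rfl

theorem perm_smul_of_forall_dominates {A : Finset ℕ} {L : List (ZIdx n)}
    (h : ∀ I ∈ L, Dominates A I.supp) : perm L • A = A := by
  induction L with
  | nil => exact one_smul _ A
  | cons I L ih =>
    obtain ⟨hI, hL⟩ := List.forall_mem_cons.1 h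
    rw [perm_cons, mul_smul, ih hL, rev_smul_of_dominates hI]

/-- The supports of the letters of a word, each one pulled back along the letters to its right.
The relations of `Z(n)` preserve this multiset. -/
def labels : List (ZIdx n) → Multiset (Finset ℕ)
  | [] => 0
  | I :: L => ((perm L)⁻¹ • I.supp) ::ₘ labels L

theorem labels_cons (I : ZIdx n) (L : List (ZIdx n)) :
    labels (I :: L) = ((perm L)⁻¹ • I.supp) ::ₘ labels L := rfl

theorem card_labels (L : List (ZIdx n)) : (labels L).card = L.length := by
  induction L with
  | nil => rfl
  | cons I L ih => rw [labels_cons, Multiset.card_cons, ih, List.length_cons]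

theorem labels_append (L M : List (ZIdx n)) :
    labels (L ++ M) = (labels L).map ((perm M)⁻¹ • ·) + labels M := by
  induction L with
  | nil => rw [List.nil_append, labels, Multiset.map_zero, zero_add]
  | cons I L ih =>
    rw [List.cons_append, labels_cons, labels_cons, ih, Multiset.map_cons, Multiset.cons_add,
      perm_append, mul_inv_rev, mul_smul]

theorem labels_reverse (L : List (ZIdx n)) :
    labels L.reverse = (labels L).map (perm L • ·) := by
  induction L with
  | nil => rfl
  | cons I L ih =>
    have hI : perm (I :: L) • (perm L)⁻¹ • I.supp = I.supp := by
      rw [perm_cons, mul_smul, smul_inv_smul, rev_smul_of_dominates (.refl _)]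
    have hsingle : labels [I] = {I.supp} := by
      rw [labels_cons, perm_nil, inv_one, one_smul, labels, Multiset.cons_zero]
    rw [List.reverse_cons, labels_append, ih, hsingle, labels_cons, Multiset.map_cons, hI,
      ← Multiset.singleton_add, add_comm, Multiset.map_map, perm_cons, perm_nil, mul_one, rev_inv,
      perm_cons]
    simp only [Function.comp_def, mul_smul]

theorem labels_eq_map_supp_of_laminar_labels {L : List (ZIdx n)} (hL : L.Pairwise LongerFirst)
    (hlam : Laminar (labels L)) : labels L = (L : Multiset (ZIdx n)).map supp := by
  induction L with
  | nil => rfl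
  | cons I L ih =>
    obtain ⟨hIL, hL⟩ := List.pairwise_cons.1 hL
    have hlabels := ih hL (hlam.mono (Multiset.le_cons_self _ _))
    have hfix : perm L • (perm L)⁻¹ • I.supp = (perm L)⁻¹ • I.supp := by
      refine perm_smul_of_forall_dominates fun J hJ => ?_
      have hJL : J.supp ∈ labels L := hlabels ▸ Multiset.mem_map_of_mem _ hJ
      refine (hlam _ (Multiset.mem_cons_self _ _) _
        (Multiset.mem_cons_of_mem hJL)).dominates_of_card_le ?_
      rw [Finset.card_smul_finset]
      exact (hIL J hJ).card_le
    rw [smul_inv_smul] at hfix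
    rw [labels_cons, ← hfix, hlabels, ← Multiset.cons_coe, Multiset.map_cons]

theorem labels_eq_map_supp_of_laminar_map_supp {L : List (ZIdx n)} (hL : L.Pairwise LongerFirst)
    (hlam : Laminar ((L : Multiset (ZIdx n)).map supp)) :
    labels L = (L : Multiset (ZIdx n)).map supp := by
  induction L with
  | nil => rfl
  | cons I L ih =>
    obtain ⟨hIL, hL⟩ := List.pairwise_cons.1 hL
    rw [← Multiset.cons_coe, Multiset.map_cons] at hlam ⊢
    have hfix : perm L • I.supp = I.supp := perm_smul_of_forall_dominates fun J hJ =>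
      (hlam _ (Multiset.mem_cons_self _ _) _ (Multiset.mem_cons_of_mem
        (Multiset.mem_map_of_mem _ hJ))).dominates_of_card_le (hIL J hJ).card_le
    rw [labels_cons, inv_smul_eq_iff.2 hfix.symm, ih hL (hlam.mono (Multiset.le_cons_self _ _))]

/-- The word obtained from `L` by doubling every letter. -/
def double (L : List (ZIdx n)) : List (ZIdx n) := L.flatMap fun I => [I, I]

theorem double_cons (I : ZIdx n) (L : List (ZIdx n)) : double (I :: L) = I :: I :: double L := rfl

theorem coe_double (L : List (ZIdx n)) : (double L : Multiset (ZIdx n)) = 2 • (L : Multiset _) := by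
  induction L with
  | nil => rfl
  | cons I L ih =>
    simp only [double_cons, ← Multiset.cons_coe, ih, ← Multiset.singleton_add, nsmul_add]
    rw [← add_assoc, ← two_nsmul]

theorem perm_double (L : List (ZIdx n)) : perm (double L) = 1 := by
  induction L with
  | nil => rfl
  | cons I L ih => rw [double_cons, perm_cons, perm_cons, ih, mul_one, rev_mul_self]

theorem labels_double (L : List (ZIdx n)) :
    labels (double L) = (double L : Multiset (ZIdx n)).map supp := by
  induction L with
  | nil => rfl
  | cons I L ih =>
    rw [double_cons, labels_cons, labels_cons, ih, perm_cons, perm_double, mul_one, inv_one,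
      one_smul, rev_inv, rev_smul_of_dominates (.refl _)]
    rfl

theorem labels_append_double_append_reverse_append (X K L Y : List (ZIdx n)) :
    labels (X ++ (double K ++ L.reverse) ++ Y) =
      (labels X + (double K : Multiset (ZIdx n)).map supp + labels L).map
        (((perm Y)⁻¹ * perm L) • ·) + labels Y := by
  simp only [labels_append, labels_double, labels_reverse, perm_append, perm_double, perm_reverse,
    one_mul, inv_inv, Multiset.map_add, Multiset.map_map, Function.comp_def, mul_smul,
    add_assoc]

/-! ### The action on labels -/

/-- The states on which `Z(n)` acts by signed partial maps: a permutation, recording the product of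
the reversals applied so far, and the multiset of their labels. -/
abbrev State := Equiv.Perm ℕ × Multiset (Finset ℕ)

open Classical in
/-- The operator by which `gen I` acts: it reverses `I` and inserts the label of `I`, with a sign,
unless the labels cease to be laminar. -/
noncomputable def act (I : ZIdx n) : Module.End ℤ (State →₀ ℤ) :=
  Finsupp.linearCombination ℤ fun s =>
    if Laminar ((s.1⁻¹ • I.supp) ::ₘ s.2) then
      Finsupp.single (I.rev * s.1, (s.1⁻¹ • I.supp) ::ₘ s.2) (insertSign (s.1⁻¹ • I.supp) s.2)
    else 0

theorem act_single_of_laminar {I : ZIdx n} {σ : Equiv.Perm ℕ} {m : Multiset (Finset ℕ)} (c : ℤ)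
    (h : Laminar ((σ⁻¹ • I.supp) ::ₘ m)) :
    act I (Finsupp.single (σ, m) c) =
      Finsupp.single (I.rev * σ, (σ⁻¹ • I.supp) ::ₘ m) (c * insertSign (σ⁻¹ • I.supp) m) := by
  rw [act, Finsupp.linearCombination_single, if_pos h, Finsupp.smul_single, smul_eq_mul]

theorem act_single_of_not_laminar {I : ZIdx n} {σ : Equiv.Perm ℕ} {m : Multiset (Finset ℕ)} (c : ℤ)
    (h : ¬ Laminar ((σ⁻¹ • I.supp) ::ₘ m)) : act I (Finsupp.single (σ, m) c) = 0 := by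
  rw [act, Finsupp.linearCombination_single, if_neg h, smul_zero]

open Classical in
theorem act_act_single (I J : ZIdx n) (σ : Equiv.Perm ℕ) (m : Multiset (Finset ℕ)) (c : ℤ) :
    act I (act J (Finsupp.single (σ, m) c)) =
      if Laminar ((σ⁻¹ • J.rev • I.supp) ::ₘ (σ⁻¹ • J.supp) ::ₘ m) then
        Finsupp.single (I.rev * J.rev * σ, (σ⁻¹ • J.rev • I.supp) ::ₘ (σ⁻¹ • J.supp) ::ₘ m)
          (c * insertSign (σ⁻¹ • J.supp) m *
            insertSign (σ⁻¹ • J.rev • I.supp) ((σ⁻¹ • J.supp) ::ₘ m))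
      else 0 := by
  have hlabel : (J.rev * σ)⁻¹ • I.supp = σ⁻¹ • J.rev • I.supp := by
    rw [mul_inv_rev, mul_smul, rev_inv]
  by_cases hJ : Laminar ((σ⁻¹ • J.supp) ::ₘ m)
  · rw [act_single_of_laminar c hJ]
    split_ifs with hIJ <;> rw [← hlabel] at hIJ
    · rw [act_single_of_laminar _ hIJ, hlabel, mul_assoc I.rev]
    · exact act_single_of_not_laminar _ hIJ
  · rw [act_single_of_not_laminar c hJ, map_zero,
      if_neg fun hIJ => hJ (hIJ.mono (Multiset.le_cons_self _ _))]

theorem act_mul_act_of_dominates {I J : ZIdx n} (h : Dominates I.supp J.supp) :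
    act I * act J = (-1 : ℤ) ^ exchangeExp I.supp J.supp • (act (I.reflect J) * act I) := by
  refine Finsupp.lhom_ext fun ⟨σ, m⟩ c => ?_
  have hsign : (-1 : ℤ) ^ insertExp (σ⁻¹ • J.supp) (σ⁻¹ • I.supp) =
      (-1) ^ exchangeExp I.supp J.supp * (-1) ^ insertExp (σ⁻¹ • I.supp) (σ⁻¹ • J.supp) := by
    rw [neg_one_pow_insertExp ((dominates_smul _ _ _).2 h), exchangeExp_smul]
  rw [LinearMap.smul_apply, Module.End.mul_apply, Module.End.mul_apply, act_act_single,
    act_act_single, supp_reflect h, rev_smul_rev_smul, rev_smul_of_dominates h, rev_mul_rev h,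
    Multiset.cons_swap]
  split_ifs
  · rw [Finsupp.smul_single, insertSign_cons, insertSign_cons, hsign, smul_eq_mul]
    ring_nf
  · rw [smul_zero]

theorem act_mul_act_of_not_compatible {I J : ZIdx n} (h : ¬ Compatible I.supp J.supp) :
    act I * act J = 0 := by
  refine Finsupp.lhom_ext fun ⟨σ, m⟩ c => ?_
  rw [Module.End.mul_apply, act_act_single, if_neg, LinearMap.zero_apply]
  intro hlam
  have hcomp := hlam _ (Multiset.mem_cons_self _ _) _
    (Multiset.mem_cons_of_mem (Multiset.mem_cons_self _ _))
  rw [compatible_smul, ← compatible_smul J.rev, rev_smul_rev_smul,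
    rev_smul_of_dominates (.refl _)] at hcomp
  exact h hcomp

/-- The representation of `Z(n)` in which `gen I` acts by `act I`. -/
noncomputable def rep : Zring n →+* Module.End ℤ (State →₀ ℤ) :=
  lift act (fun _ _ => act_mul_act_of_dominates) fun _ _ => act_mul_act_of_not_compatible

open Classical in
theorem exists_rep_word_single (L : List (ZIdx n)) :
    ∃ e : ℤ, e ≠ 0 ∧ rep (word L) (Finsupp.single (1, 0) 1) =
      if Laminar (labels L) then Finsupp.single (perm L, labels L) e else 0 := by
  induction L with
  | nil =>
    refine ⟨1, one_ne_zero, ?_⟩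
    rw [labels, if_pos laminar_zero]
    simp only [word, List.map_nil, List.prod_nil, map_one, Module.End.one_apply, perm_nil]
  | cons I L ih =>
    obtain ⟨e, he, hL⟩ := ih
    refine ⟨e * insertSign ((perm L)⁻¹ • I.supp) (labels L),
      mul_ne_zero he (insertSign_ne_zero _ _), ?_⟩
    rw [word_cons, map_mul, Module.End.mul_apply, hL, rep, lift_gen, labels_cons, perm_cons]
    by_cases hlam : Laminar (labels L)
    · rw [if_pos hlam]
      split_ifs with h
      · exact act_single_of_laminar e h
      · exact act_single_of_not_laminar e h
    · rw [if_neg hlam, map_zero, if_neg fun h => hlam (h.mono (Multiset.le_cons_self _ _))]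

theorem rep_word_single_apply_ne_zero {L : List (ZIdx n)} {s : State} :
    rep (word L) (Finsupp.single (1, 0) 1) s ≠ 0 ↔ Laminar (labels L) ∧ s = (perm L, labels L) := by
  classical
  obtain ⟨e, he, hL⟩ := exists_rep_word_single L
  rw [hL]
  by_cases hlam : Laminar (labels L)
  · rw [if_pos hlam, and_iff_right hlam, Finsupp.single_apply_ne_zero, and_iff_left he]
  · rw [if_neg hlam, Finsupp.zero_apply]
    exact iff_of_false (not_not.2 rfl) fun h => hlam h.1

theorem sum_smul_word_ne_zero {ι : Type*} {s : Finset ι} {c : ι → ℤ} {w : ι → List (ZIdx n)} {i : ι}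
    (hi : i ∈ s) (hc : c i ≠ 0) (hlam : Laminar (labels (w i)))
    (huniq : ∀ j ∈ s, labels (w j) = labels (w i) → j = i) :
    ∑ j ∈ s, c j • word (w j) ≠ 0 := by
  intro hsum
  have hcoeff := DFunLike.congr_fun (congrArg (rep · (Finsupp.single (1, 0) 1)) hsum)
    (perm (w i), labels (w i))
  simp only [map_sum, map_zsmul, map_zero, LinearMap.sum_apply, LinearMap.smul_apply,
    LinearMap.zero_apply, Finsupp.finsetSum_apply, Finsupp.smul_apply, Finsupp.zero_apply]
    at hcoeff
  rw [Finset.sum_eq_single_of_mem i hi fun j hj hji => ?_] at hcoeff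
  · exact smul_ne_zero hc (rep_word_single_apply_ne_zero.2 ⟨hlam, rfl⟩) hcoeff
  · rw [smul_eq_zero]
    refine .inr (not_not.1 fun hne => hji (huniq j hj ?_))
    exact (congrArg Prod.snd (rep_word_single_apply_ne_zero.1 hne).2).symm

/-! ### Products `a * r * a` -/

/-- A word whose letters are those of `z`, each repeated a multiple of `N` times that determines its
support. -/
noncomputable def padding (N : ℕ) (z : Multiset (ZIdx n)) : List (ZIdx n) :=
  (∑ I ∈ z.toFinset, Multiset.replicate (N * (Encodable.encode I.supp + 1)) I).toList

/-- The word inserted between two copies of a ring element to detect the normal word with letters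
`z`: the padding rigidifies the labels, and the reversed normal word cancels the permutation. -/
noncomputable def testWord (N : ℕ) (z : Multiset (ZIdx n)) : List (ZIdx n) :=
  double (padding N z) ++ (normalWord z).reverse

/-- The words into which `a * word (testWord N z) * a` expands when `a` is a combination of normal
words. -/
noncomputable def sandwich (N : ℕ) (z x y : Multiset (ZIdx n)) : List (ZIdx n) :=
  normalWord x ++ testWord N z ++ normalWord y

/-- The permutation by which the labels of `x` and `z` are moved in those of `sandwich N z x y`. -/
def displacement (z y : Multiset (ZIdx n)) : Equiv.Perm ℕ :=
  (perm (normalWord y))⁻¹ * perm (normalWord z)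

/-- The normal words with letters `y` and `z` move the letters of `z` in the same way. -/
def SameAction (z y : Multiset (ZIdx n)) : Prop := ∀ I ∈ z, displacement z y • I.supp = I.supp

section Sandwich

variable {N : ℕ} {z x y x₀ y₀ : Multiset (ZIdx n)}

theorem mem_of_mem_padding {I : ZIdx n} (hI : I ∈ padding N z) : I ∈ z := by
  obtain ⟨J, hJ, hIJ⟩ := Multiset.mem_sum.1 (Multiset.mem_toList.1 hI)
  rw [Multiset.eq_of_mem_replicate hIJ]
  exact Multiset.mem_toFinset.1 hJ

theorem count_padding {I : ZIdx n} (hI : I ∈ z) :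
    (padding N z : Multiset (ZIdx n)).count I = N * (Encodable.encode I.supp + 1) := by
  simp only [padding, Multiset.coe_toList, Multiset.count_sum', Multiset.count_replicate]
  rw [Finset.sum_ite_eq', if_pos (Multiset.mem_toFinset.2 hI)]

theorem mem_of_mem_double_padding {I : ZIdx n}
    (hI : I ∈ (double (padding N z) : Multiset (ZIdx n))) : I ∈ z := by
  rw [coe_double] at hI
  exact mem_of_mem_padding (Multiset.mem_of_mem_nsmul hI)

theorem count_map_supp_double_padding {I : ZIdx n} (hI : I ∈ z) :
    ((double (padding N z) : Multiset (ZIdx n)).map supp).count I.supp =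
      N * (2 * (Encodable.encode I.supp + 1)) := by
  rw [Multiset.count_map_eq_count' _ _ supp_injective, coe_double, Multiset.count_nsmul,
    count_padding hI, mul_left_comm]

theorem coe_testWord :
    (testWord N z : Multiset (ZIdx n)) = (double (padding N z) : Multiset (ZIdx n)) + z := by
  rw [testWord, ← Multiset.coe_add, Multiset.coe_reverse, coe_normalWord]

theorem coe_testWord_subset : (testWord N z : Multiset (ZIdx n)) ⊆ z := fun I hI => by
  rw [coe_testWord] at hI
  exact (Multiset.mem_add.1 hI).elim mem_of_mem_double_padding id

theorem labels_normalWord_of_laminar_labels (h : Laminar (labels (normalWord x))) :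
    labels (normalWord x) = x.map supp := by
  rw [labels_eq_map_supp_of_laminar_labels (pairwise_normalWord x) h, coe_normalWord]

theorem labels_normalWord_of_laminar_map_supp (h : Laminar (x.map supp)) :
    labels (normalWord x) = x.map supp := by
  rw [labels_eq_map_supp_of_laminar_map_supp (pairwise_normalWord x) (by rwa [coe_normalWord]),
    coe_normalWord]

theorem Laminar.map_supp_of_subset (hz : Laminar (z.map supp)) (hx : x ⊆ z) :
    Laminar (x.map supp) :=
  fun A hA B hB => hz A (Multiset.map_subset_map hx hA) B (Multiset.map_subset_map hx hB)

theorem labels_sandwich (hz : Laminar (z.map supp)) :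
    labels (sandwich N z x y) =
      (labels (normalWord x) + (testWord N z : Multiset (ZIdx n)).map supp).map
        (displacement z y • ·) + labels (normalWord y) := by
  rw [sandwich, testWord, labels_append_double_append_reverse_append,
    labels_normalWord_of_laminar_map_supp hz, ← testWord, coe_testWord, Multiset.map_add supp,
    ← add_assoc, displacement]

theorem SameAction.refl (z : Multiset (ZIdx n)) : SameAction z z := fun I _ => by
  rw [displacement, inv_mul_cancel, one_smul]

theorem SameAction.map_smul_map_supp (h : SameAction z y) (hx : x ⊆ z) :
    (x.map supp).map (displacement z y • ·) = x.map supp := by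
  rw [Multiset.map_map]
  exact Multiset.map_congr rfl fun I hI => h I (hx hI)

theorem SameAction.labels_sandwich (h : SameAction z y) (hz : Laminar (z.map supp)) :
    labels (sandwich N z x y) =
      (labels (normalWord x)).map (displacement z y • ·) +
        (testWord N z : Multiset (ZIdx n)).map supp + labels (normalWord y) := by
  rw [Zring.labels_sandwich hz, Multiset.map_add, h.map_smul_map_supp coe_testWord_subset]

theorem SameAction.labels_sandwich_of_subset (h : SameAction z y) (hz : Laminar (z.map supp))
    (hx : x ⊆ z) (hy : y ⊆ z) :
    labels (sandwich N z x y) = (x + (testWord N z : Multiset (ZIdx n)) + y).map supp := by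
  rw [h.labels_sandwich hz, labels_normalWord_of_laminar_map_supp (hz.map_supp_of_subset hx),
    labels_normalWord_of_laminar_map_supp (hz.map_supp_of_subset hy), h.map_smul_map_supp hx,
    Multiset.map_add, Multiset.map_add]

theorem SameAction.laminar_labels_sandwich (h : SameAction z y) (hz : Laminar (z.map supp))
    (hx : x ⊆ z) (hy : y ⊆ z) : Laminar (labels (sandwich N z x y)) := by
  rw [h.labels_sandwich_of_subset hz hx hy]
  refine hz.map_supp_of_subset fun I hI => ?_
  rcases Multiset.mem_add.1 hI with hI | hI
  · exact (Multiset.mem_add.1 hI).elim (@hx I) (@coe_testWord_subset _ _ _ I)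
  · exact hy hI

theorem sameAction_of_labels_sandwich_eq (hz : Laminar (z.map supp))
    (hN : x.card + z.card + y.card < N) (hN₀ : x₀.card + z.card + y₀.card < N)
    (h : labels (sandwich N z x y) = (x₀ + (testWord N z : Multiset (ZIdx n)) + y₀).map supp) :
    SameAction z y := by
  set E := (double (padding N z) : Multiset (ZIdx n)).map supp with hE
  have hcount {I : ZIdx n} (hI : I ∈ z) :
      E.count I.supp = N * (2 * (Encodable.encode I.supp + 1)) := count_map_supp_double_padding hI
  have hcode : Function.Injective fun A : Finset ℕ => 2 * (Encodable.encode A + 1) :=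
    fun A B hAB => Encodable.encode_injective (by dsimp only at hAB; omega)
  have hsplit : (labels (normalWord x) + z.map supp).map (displacement z y • ·) +
      labels (normalWord y) + E.map (displacement z y • ·) = (x₀ + z + y₀).map supp + E := by
    rw [labels_sandwich hz, coe_testWord] at h
    simp only [Multiset.map_add, ← hE] at h ⊢
    convert h using 1 <;> ac_rfl
  have hfix := apply_eq_self_of_add_map_eq_add (MulAction.injective _) (N := N)
    (by simpa only [Multiset.card_add, Multiset.card_map, card_labels, length_normalWord] using hN)
    (by simpa only [Multiset.card_add, Multiset.card_map] using hN₀) hcode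
    (Multiset.forall_mem_map_iff.2 fun I hI => hcount (mem_of_mem_double_padding hI)) hsplit
  refine fun I hI => hfix _ (Multiset.count_pos.1 ?_)
  rw [hcount hI]
  exact Nat.mul_pos (Nat.zero_lt_of_lt hN) (by omega)

theorem SameAction.subset_and_add_eq_of_labels_sandwich_eq (h : SameAction z y)
    (hz : Laminar (z.map supp)) (hx₀ : x₀ ⊆ z) (hy₀ : y₀ ⊆ z)
    (hlam : Laminar (labels (sandwich N z x y)))
    (heq : labels (sandwich N z x y) =
      (x₀ + (testWord N z : Multiset (ZIdx n)) + y₀).map supp) :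
    x ⊆ z ∧ y ⊆ z ∧ x + y = x₀ + y₀ := by
  rw [h.labels_sandwich hz] at hlam heq
  have hx : labels (normalWord x) = x.map supp := labels_normalWord_of_laminar_labels <|
    .of_map_smul (hlam.mono ((Multiset.le_add_right _ _).trans (Multiset.le_add_right _ _)))
  have hy : labels (normalWord y) = y.map supp := labels_normalWord_of_laminar_labels <|
    hlam.mono (Multiset.le_add_left _ _)
  have hadd : (x.map supp).map (displacement z y • ·) + y.map supp = (x₀ + y₀).map supp := by
    rw [hx, hy, Multiset.map_add, Multiset.map_add, add_right_comm, add_right_comm (x₀.map supp)]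
      at heq
    rw [add_right_cancel heq, Multiset.map_add]
  have hmem {A : Finset ℕ} (hA : A ∈ (x₀ + y₀).map supp) : ∃ I ∈ z, I.supp = A := by
    obtain ⟨I, hI, rfl⟩ := Multiset.mem_map.1 hA
    exact ⟨I, (Multiset.mem_add.1 hI).elim (@hx₀ I) (@hy₀ I), rfl⟩
  have hxz : x ⊆ z := fun I hI => by
    obtain ⟨J, hJ, hJI⟩ := hmem (hadd ▸ Multiset.mem_add.2
      (.inl (Multiset.mem_map_of_mem _ (Multiset.mem_map_of_mem _ hI))))
    rw [← h J hJ] at hJI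
    exact supp_injective (MulAction.injective _ hJI) ▸ hJ
  have hyz : y ⊆ z := fun I hI => by
    obtain ⟨J, hJ, hJI⟩ := hmem (hadd ▸ Multiset.mem_add.2 (.inr (Multiset.mem_map_of_mem _ hI)))
    exact supp_injective hJI ▸ hJ
  refine ⟨hxz, hyz, Multiset.map_injective supp_injective ?_⟩
  rw [← hadd, h.map_smul_map_supp hxz, Multiset.map_add]

end Sandwich

theorem exists_unique_labels_sandwich {S : Finset (Multiset (ZIdx n))} {z : Multiset (ZIdx n)}
    (hzS : z ∈ S) (hz : Laminar (z.map supp)) {N : ℕ} (hN : ∀ x ∈ S, 3 * x.card < N) :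
    ∃ x₀ ∈ S, ∃ y₀ ∈ S, Laminar (labels (sandwich N z x₀ y₀)) ∧
      ∀ x ∈ S, ∀ y ∈ S, labels (sandwich N z x y) = labels (sandwich N z x₀ y₀) →
        x = x₀ ∧ y = y₀ := by
  classical
  have hzX : z ∈ S.filter (· ⊆ z) := Finset.mem_filter.2 ⟨hzS, Multiset.Subset.refl z⟩
  have hzY : z ∈ {y ∈ S | y ⊆ z ∧ SameAction z y} :=
    Finset.mem_filter.2 ⟨hzS, Multiset.Subset.refl z, .refl z⟩
  obtain ⟨x₀, hx₀, y₀, hy₀, huniq⟩ := UniqueSums.uniqueAdd_of_nonempty ⟨z, hzX⟩ ⟨z, hzY⟩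
  obtain ⟨hx₀S, hx₀z⟩ := Finset.mem_filter.1 hx₀
  obtain ⟨hy₀S, hy₀z, hact₀⟩ := Finset.mem_filter.1 hy₀
  have hlam : Laminar (labels (sandwich N z x₀ y₀)) :=
    hact₀.laminar_labels_sandwich hz hx₀z hy₀z
  refine ⟨x₀, hx₀S, y₀, hy₀S, hlam, fun x hx y hy heq => ?_⟩
  have hcard {x y : Multiset (ZIdx n)} (hx : x ∈ S) (hy : y ∈ S) :
      x.card + z.card + y.card < N := by
    have := hN x hx
    have := hN y hy
    have := hN z hzS
    omega
  have hlabels := heq.trans (hact₀.labels_sandwich_of_subset hz hx₀z hy₀z)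
  have hact : SameAction z y :=
    sameAction_of_labels_sandwich_eq hz (hcard hx hy) (hcard hx₀S hy₀S) hlabels
  obtain ⟨hxz, hyz, hadd⟩ := hact.subset_and_add_eq_of_labels_sandwich_eq hz hx₀z hy₀z
    (heq ▸ hlam) hlabels
  exact huniq (Finset.mem_filter.2 ⟨hx, hxz⟩) (Finset.mem_filter.2 ⟨hy, hyz, hact⟩) hadd

theorem sum_mul_word_mul_sum (S : Finset (Multiset (ZIdx n))) (c : Multiset (ZIdx n) → ℤ)
    (N : ℕ) (z : Multiset (ZIdx n)) :
    (∑ x ∈ S, c x • word (normalWord x)) * word (testWord N z) *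
        (∑ y ∈ S, c y • word (normalWord y)) =
      ∑ p ∈ S ×ˢ S, (c p.1 * c p.2) • word (sandwich N z p.1 p.2) := by
  rw [Finset.sum_mul, Finset.sum_mul_sum, Finset.sum_product]
  simp only [sandwich, word_append, smul_mul_assoc, mul_smul_comm, smul_smul,
    mul_comm]

end Zring

/-- The ring `Z(n)` is semiprime: for every nonzero `a` there is `r`
with `a * r * a ≠ 0`. -/
theorem Zring_semiprime (n : ℕ) (hn : 2 ≤ n) :
    ∀ a : Zring n, a ≠ 0 → ∃ r : Zring n, a * r * a ≠ 0 := by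
  intro a ha
  obtain ⟨c, rfl⟩ := Zring.exists_eq_sum_normalWord a
  obtain ⟨z, hz, hcz⟩ := Finset.exists_ne_zero_of_sum_ne_zero ha
  have hlam := Zring.laminar_map_supp_of_word_normalWord_ne_zero (right_ne_zero_of_smul hcz)
  let N := 3 * c.support.sup Multiset.card + 1
  have hN : ∀ x ∈ c.support, 3 * x.card < N := fun x hx =>
    Nat.lt_succ_of_le (Nat.mul_le_mul_left 3 (Finset.le_sup hx))
  obtain ⟨x₀, hx₀, y₀, hy₀, hlam₀, huniq⟩ := Zring.exists_unique_labels_sandwich hz hlam hN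
  refine ⟨Zring.word (Zring.testWord N z), ?_⟩
  rw [Zring.sum_mul_word_mul_sum]
  refine Zring.sum_smul_word_ne_zero (i := (x₀, y₀)) (Finset.mk_mem_product hx₀ hy₀)
    (mul_ne_zero (Finsupp.mem_support_iff.1 hx₀) (Finsupp.mem_support_iff.1 hy₀)) hlam₀ ?_
  rintro ⟨x, y⟩ hxy heq
  obtain ⟨hx, hy⟩ := Finset.mem_product.1 hxy
  exact Prod.ext_iff.2 (huniq x hx y hy heq)
end

section
/- If n ≥ 4, then the ring Z(n) is not prime: the elements a = z_{1,2} z_{n−1,n} and b = z_{2,n−1} of Z(n) are both nonzero, yet a·r·b = 0 for every r ∈ Z(n). -/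
/-!
Write `b = z_{2,n-1}`, `c = z_{1,n-2} z_{1,n-1}` and `d = z_{3,n} z_{2,n}`. Left multiplication by a
generator carries each of `b`, `c`, `d` to a right multiple of one of them: contained intervals pass
through, overlapping ones give `0`, and the few that contain such long intervals carry `b`, `c` and
`d` to right multiples of one another. Hence the right ideal they generate is two-sided, and
`z_{1,2} z_{n-1,n}` annihilates it from the left. The reflection `i ↦ n + 1 - i` fixes `b` and
exchanges `c` and `d`.

Nonvanishing is detected modulo 2, where all signs disappear: sending the intervals of a pairwise
disjoint collection to `1` and all others to `0` respects the relations.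
-/

theorem mul_mul_eq_zero_of_dvd_generator_mul {A : Type*} [Ring A] {G S : Set A} {a : A}
    (hG : Subring.closure G = ⊤) (hGS : ∀ g ∈ G, ∀ s ∈ S, ∃ t ∈ S, t ∣ g * s)
    (haS : ∀ s ∈ S, a * s = 0) (r : A) {s : A} (hs : s ∈ S) : a * r * s = 0 := by
  have monomial_mul {m : A} (hm : m ∈ Submonoid.closure G) : ∀ s ∈ S, ∃ t ∈ S, t ∣ m * s := by
    induction hm using Submonoid.closure_induction with
    | mem g hg => exact hGS g hg
    | one => exact fun s hs => ⟨s, hs, by rw [one_mul]⟩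
    | mul m m' _ _ ihm ihm' =>
      intro s hs
      obtain ⟨t, ht, x, hx⟩ := ihm' s hs
      obtain ⟨t', ht', hdvd⟩ := ihm t ht
      exact ⟨t', ht', by rw [mul_assoc, hx, ← mul_assoc]; exact hdvd.mul_right x⟩
  have hr : r ∈ AddSubgroup.closure (Submonoid.closure G : Set A) :=
    Subring.mem_closure_iff.mp (hG ▸ Subring.mem_top r)
  induction hr using AddSubgroup.closure_induction with
  | mem m hm =>
    obtain ⟨t, ht, x, hx⟩ := monomial_mul hm s hs
    rw [mul_assoc, hx, ← mul_assoc, haS t ht, zero_mul]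
  | zero => rw [mul_zero, zero_mul]
  | add x y _ _ hx hy => rw [mul_add, add_mul, hx, hy, add_zero]
  | neg x _ hx => rw [mul_neg, neg_mul, hx, neg_zero]

/-- A family of ring elements indexed by the intervals `[i, j]` with `1 ≤ i < j ≤ n` that satisfies
the defining relations of `Z(n)` up to sign. The reversal of `[i', j']` inside `[i, j]` is written
as the interval `[i'', j'']` with `i'' + j' = i + j = i' + j''`, which avoids both subtraction and
the convention for `z_{a,b}` with `a > b`. The values of `z` outside the index range are
arbitrary. -/
structure IntervalRelations {A : Type*} [Ring A] (n : ℕ) (z : ℕ → ℕ → A) : Prop where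
  mul_of_contains {i j i' j' i'' j'' : ℕ} : 1 ≤ i → i ≤ i' → i' < j' → j' ≤ j → j ≤ n →
    i'' + j' = i + j → i' + j'' = i + j → ∃ ε : ℤˣ, z i j * z i' j' = ε • (z i'' j'' * z i j)
  mul_of_disjoint {i j i' j' : ℕ} : 1 ≤ i → i < j → j ≤ n → 1 ≤ i' → i' < j' → j' ≤ n →
    j < i' ∨ j' < i → ∃ ε : ℤˣ, z i j * z i' j' = ε • (z i' j' * z i j)
  mul_of_overlap {i j i' j' : ℕ} : 1 ≤ i → j ≤ n → 1 ≤ i' → j' ≤ n →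
    (i < i' ∧ i' ≤ j ∧ j < j') ∨ (i' < i ∧ i ≤ j' ∧ j' < j) → z i j * z i' j' = 0

/-- The set `{b, c, d}` of long monomials whose right multiples are stable under left
multiplication by the `z i j`. -/
def longMonomials {A : Type*} [Mul A] (n : ℕ) (z : ℕ → ℕ → A) : Set A :=
  {z 2 (n - 1), z 1 (n - 2) * z 1 (n - 1), z 3 n * z 2 n}

/-- The family obtained from `z` by the reflection `i ↦ n + 1 - i` of `{1, …, n}`. -/
def reflectFamily {A : Type*} (n : ℕ) (z : ℕ → ℕ → A) (i j : ℕ) : A :=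
  z (n + 1 - j) (n + 1 - i)

theorem reflectFamily_eq {A : Type*} {n i j i' j' : ℕ} (z : ℕ → ℕ → A)
    (hi : i + j' = n + 1) (hj : j + i' = n + 1) : reflectFamily n z i j = z i' j' := by
  rw [reflectFamily, Nat.sub_eq_of_eq_add' hj.symm, Nat.sub_eq_of_eq_add' hi.symm]

theorem longMonomials_reflectFamily {A : Type*} [Mul A] {n : ℕ} (hn : 2 ≤ n)
    (z : ℕ → ℕ → A) : longMonomials n (reflectFamily n z) = longMonomials n z := by
  have hb : reflectFamily n z 2 (n - 1) = z 2 (n - 1) := reflectFamily_eq z (by omega) (by omega)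
  have hc : reflectFamily n z 1 (n - 2) = z 3 n := reflectFamily_eq z (by omega) (by omega)
  have hc' : reflectFamily n z 1 (n - 1) = z 2 n := reflectFamily_eq z (by omega) (by omega)
  have hd : reflectFamily n z 3 n = z 1 (n - 2) := reflectFamily_eq z (by omega) (by omega)
  have hd' : reflectFamily n z 2 n = z 1 (n - 1) := reflectFamily_eq z (by omega) (by omega)
  rw [longMonomials, longMonomials, hb, hc, hc', hd, hd',
    Set.pair_comm (z 3 n * z 2 n) (z 1 (n - 2) * z 1 (n - 1))]

namespace IntervalRelations

variable {A : Type*} [Ring A] {n : ℕ} {z : ℕ → ℕ → A}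

theorem reflect (hz : IntervalRelations n z) : IntervalRelations n (reflectFamily n z) where
  mul_of_contains _ _ _ _ _ _ _ :=
    hz.mul_of_contains (by omega) (by omega) (by omega) (by omega) (by omega) (by omega) (by omega)
  mul_of_disjoint _ _ _ _ _ _ _ :=
    hz.mul_of_disjoint (by omega) (by omega) (by omega) (by omega) (by omega) (by omega) (by omega)
  mul_of_overlap _ _ _ _ _ :=
    hz.mul_of_overlap (by omega) (by omega) (by omega) (by omega) (by omega)

theorem reversal_mul_dvd_mul (hz : IntervalRelations n z) {i j i' j' i'' j'' : ℕ} (hi : 1 ≤ i)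
    (hii' : i ≤ i') (hij' : i' < j') (hjj' : j' ≤ j) (hj : j ≤ n) (hi'' : i'' + j' = i + j)
    (hj'' : i' + j'' = i + j) : z i'' j'' * z i j ∣ z i j * z i' j' := by
  obtain ⟨ε, h⟩ := hz.mul_of_contains hi hii' hij' hjj' hj hi'' hj''
  exact h ▸ dvd_smul_of_dvd ε dvd_rfl

theorem mul_of_contained (hz : IntervalRelations n z) {i j i' j' i'' j'' : ℕ} (hi : 1 ≤ i)
    (hii' : i ≤ i') (hij' : i' < j') (hjj' : j' ≤ j) (hj : j ≤ n) (hi'' : i'' + j' = i + j)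
    (hj'' : i' + j'' = i + j) : ∃ ε : ℤˣ, z i' j' * z i j = ε • (z i j * z i'' j'') := by
  obtain ⟨ε, h⟩ := hz.mul_of_contains (i' := i'') (j' := j'') (i'' := i') (j'' := j') hi (by omega)
    (by omega) (by omega) hj hj'' hi''
  exact ⟨ε⁻¹, by rw [h, inv_smul_smul]⟩

theorem dvd_contained_mul (hz : IntervalRelations n z) {i j i' j' : ℕ} (hi : 1 ≤ i) (hii' : i ≤ i')
    (hij' : i' < j') (hjj' : j' ≤ j) (hj : j ≤ n) : z i j ∣ z i' j' * z i j := by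
  obtain ⟨ε, h⟩ := hz.mul_of_contained (i'' := i + j - j') (j'' := i + j - i') hi hii' hij' hjj' hj
    (by omega) (by omega)
  exact h ▸ dvd_smul_of_dvd ε (dvd_mul_right _ _)

theorem right_end_mul_long_left_pair_eq_zero (hz : IntervalRelations n z) (hn : 4 ≤ n) :
    z (n - 1) n * (z 1 (n - 2) * z 1 (n - 1)) = 0 := by
  obtain ⟨ε, hcomm⟩ := hz.mul_of_disjoint (i := n - 1) (j := n) (i' := 1) (j' := n - 2)
    (by omega) (by omega) le_rfl le_rfl (by omega) (by omega) (by omega)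
  have hzero : z (n - 1) n * z 1 (n - 1) = 0 :=
    hz.mul_of_overlap (by omega) le_rfl le_rfl (by omega) (by omega)
  rw [← mul_assoc, hcomm, smul_mul_assoc, mul_assoc, hzero, mul_zero, smul_zero]

theorem left_end_mul_long_right_pair_eq_zero (hz : IntervalRelations n z) (hn : 4 ≤ n) :
    z 1 2 * (z 3 n * z 2 n) = 0 := by
  have h := hz.reflect.right_end_mul_long_left_pair_eq_zero hn
  rwa [reflectFamily_eq (i' := 1) (j' := 2) z (by omega) (by omega),
    reflectFamily_eq (i' := 3) (j' := n) z (by omega) (by omega),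
    reflectFamily_eq (i' := 2) (j' := n) z (by omega) (by omega)] at h

theorem ends_mul_longMonomial_eq_zero (hz : IntervalRelations n z) (hn : 4 ≤ n) :
    ∀ s ∈ longMonomials n z, z 1 2 * z (n - 1) n * s = 0 := by
  rintro s (rfl | rfl | rfl)
  · have hzero : z (n - 1) n * z 2 (n - 1) = 0 :=
      hz.mul_of_overlap (by omega) le_rfl (by omega) (by omega) (by omega)
    rw [mul_assoc, hzero, mul_zero]
  · rw [mul_assoc, hz.right_end_mul_long_left_pair_eq_zero hn, mul_zero]
  · obtain ⟨ε, hcomm⟩ := hz.mul_of_disjoint (i := 1) (j := 2) (i' := n - 1) (j' := n)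
      le_rfl (by omega) (by omega) (by omega) (by omega) le_rfl (by omega)
    rw [hcomm, smul_mul_assoc, mul_assoc, hz.left_end_mul_long_right_pair_eq_zero hn, mul_zero,
      smul_zero]

theorem exists_longMonomial_dvd_mul_middle (hz : IntervalRelations n z) (hn : 4 ≤ n) {p q : ℕ}
    (hp : 1 ≤ p) (hpq : p < q) (hq : q ≤ n) :
    ∃ t ∈ longMonomials n z, t ∣ z p q * z 2 (n - 1) := by
  have hcases : (2 ≤ p ∧ q ≤ n - 1) ∨ (p = 1 ∧ q = n) ∨ (p = 1 ∧ q = n - 1) ∨ (p = 2 ∧ q = n) ∨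
      (p < 2 ∧ 2 ≤ q ∧ q < n - 1) ∨ (2 < p ∧ p ≤ n - 1 ∧ n - 1 < q) := by omega
  rcases hcases with ⟨hp, hq⟩ | ⟨rfl, rfl⟩ | ⟨rfl, rfl⟩ | ⟨rfl, rfl⟩ | hoverlap
  · exact ⟨z 2 (n - 1), .inl rfl, hz.dvd_contained_mul (by omega) hp hpq hq (by omega)⟩
  · exact ⟨z 2 (q - 1), .inl rfl, dvd_of_mul_right_dvd <|
      hz.reversal_mul_dvd_mul le_rfl (by omega) (by omega) (by omega) le_rfl (by omega) (by omega)⟩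
  · exact ⟨z 1 (n - 2) * z 1 (n - 1), .inr (.inl rfl),
      hz.reversal_mul_dvd_mul le_rfl (by omega) (by omega) le_rfl hq (by omega) (by omega)⟩
  · exact ⟨z 3 q * z 2 q, .inr (.inr rfl),
      hz.reversal_mul_dvd_mul hp le_rfl (by omega) (by omega) le_rfl (by omega) (by omega)⟩
  · exact ⟨z 2 (n - 1), .inl rfl,
      hz.mul_of_overlap hp hq (by omega) (by omega) hoverlap ▸ dvd_zero _⟩

theorem exists_longMonomial_dvd_mul_left_pair (hz : IntervalRelations n z) (hn : 4 ≤ n) {p q : ℕ}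
    (hp : 1 ≤ p) (hpq : p < q) (hq : q ≤ n) :
    ∃ t ∈ longMonomials n z, t ∣ z p q * (z 1 (n - 2) * z 1 (n - 1)) := by
  have hcases : q ≤ n - 2 ∨ (p = 1 ∧ q = n - 1) ∨ (p = 1 ∧ q = n) ∨ (p = n - 1 ∧ q = n) ∨
      (1 < p ∧ p ≤ n - 2 ∧ n - 2 < q) := by omega
  rcases hcases with hq' | ⟨rfl, rfl⟩ | ⟨rfl, rfl⟩ | ⟨rfl, rfl⟩ | hoverlap
  · obtain ⟨ε, h⟩ := hz.mul_of_contained (i := 1) (j := n - 2) (i'' := n - 1 - q)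
      (j'' := n - 1 - p) le_rfl hp hpq hq' (by omega) (by omega) (by omega)
    refine ⟨z 1 (n - 2) * z 1 (n - 1), .inr (.inl rfl), ?_⟩
    rw [← mul_assoc, h, smul_mul_assoc, mul_assoc]
    exact dvd_smul_of_dvd ε <| mul_dvd_mul_left _ <|
      hz.dvd_contained_mul le_rfl (by omega) (by omega) (by omega) (by omega)
  · refine ⟨z 2 (n - 1), .inl rfl, ?_⟩
    rw [← mul_assoc]
    exact (dvd_of_mul_right_dvd <| hz.reversal_mul_dvd_mul le_rfl le_rfl (by omega) (by omega) hq
      (by omega) (by omega)).mul_right _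
  · obtain ⟨ε, h⟩ := hz.mul_of_contains (i := 1) (j := q) (i' := 1) (j' := q - 2) (i'' := 3)
      (j'' := q) le_rfl le_rfl (by omega) (by omega) le_rfl (by omega) (by omega)
    refine ⟨z 3 q * z 2 q, .inr (.inr rfl), ?_⟩
    rw [← mul_assoc, h, smul_mul_assoc, mul_assoc]
    exact dvd_smul_of_dvd ε <| mul_dvd_mul_left _ <| dvd_of_mul_right_dvd <|
      hz.reversal_mul_dvd_mul le_rfl le_rfl (by omega) (by omega) le_rfl (by omega) (by omega)
  · exact ⟨z 2 (q - 1), .inl rfl, hz.right_end_mul_long_left_pair_eq_zero hn ▸ dvd_zero _⟩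
  · refine ⟨z 2 (n - 1), .inl rfl, ?_⟩
    rw [← mul_assoc, hz.mul_of_overlap hp hq le_rfl (by omega) (.inr hoverlap), zero_mul]
    exact dvd_zero _

theorem exists_longMonomial_dvd_mul (hz : IntervalRelations n z) (hn : 4 ≤ n) {p q : ℕ}
    (hp : 1 ≤ p) (hpq : p < q) (hq : q ≤ n) :
    ∀ s ∈ longMonomials n z, ∃ t ∈ longMonomials n z, t ∣ z p q * s := by
  rintro s (rfl | rfl | rfl)
  · exact hz.exists_longMonomial_dvd_mul_middle hn hp hpq hq
  · exact hz.exists_longMonomial_dvd_mul_left_pair hn hp hpq hq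
  · have h := hz.reflect.exists_longMonomial_dvd_mul_left_pair hn (p := n + 1 - q) (q := n + 1 - p)
      (by omega) (by omega) (by omega)
    rwa [longMonomials_reflectFamily (by omega),
      reflectFamily_eq (i' := p) (j' := q) z (by omega) (by omega),
      reflectFamily_eq (i' := 3) (j' := n) z (by omega) (by omega),
      reflectFamily_eq (i' := 2) (j' := n) z (by omega) (by omega)] at h

theorem ends_mul_mul_middle_eq_zero (hz : IntervalRelations n z) (hn : 4 ≤ n)
    (hgen : Subring.closure {x | ∃ i j, 1 ≤ i ∧ i < j ∧ j ≤ n ∧ z i j = x} = ⊤) (r : A) :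
    z 1 2 * z (n - 1) n * r * z 2 (n - 1) = 0 := by
  refine mul_mul_eq_zero_of_dvd_generator_mul hgen ?_ (hz.ends_mul_longMonomial_eq_zero hn) r
    (.inl rfl)
  rintro _ ⟨p, q, hp, hpq, hq, rfl⟩
  exact hz.exists_longMonomial_dvd_mul hn hp hpq hq

end IntervalRelations

section Presentation

variable {n : ℕ}

theorem zf_eq_ι {i j : ℕ} (h : 1 ≤ i ∧ i < j ∧ j ≤ n) :
    zf n i j = FreeAlgebra.ι ℤ (⟨(i, j), h⟩ : ZIdx n) :=
  dif_pos h

theorem zf_swap {i j : ℕ} (hi : 1 ≤ i) (hij : i < j) (hj : j ≤ n) :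
    zf n j i = (-1 : ℤ) ^ (j - i) • zf n i j := by
  rw [zf_eq_ι ⟨hi, hij, hj⟩, zf, dif_neg (by omega), dif_pos]

theorem zElem_mul_of_contains {i j i' j' : ℕ} (hi : 1 ≤ i) (hii' : i ≤ i') (hij' : i' < j')
    (hjj' : j' ≤ j) (hj : j ≤ n) :
    ∃ ε : ℤˣ, zElem n i j * zElem n i' j' =
      ε • (zElem n (i + j - j') (i + j - i') * zElem n i j) := by
  have h := RingQuot.mkRingHom_rel (ZRel.contain i j i' j' hi (by omega) hj (by omega) hij'
    (by omega) (Set.Icc_subset_Icc hii' hjj'))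
  rw [zf_swap (i := i + j - j') (by omega) (by omega) (by omega), smul_mul_assoc, smul_smul,
    map_zsmul, map_mul, map_mul] at h
  exact ⟨(-1) ^ ((j - i) * (j' - i')) * (-1) ^ (i + j - i' - (i + j - j')), by
    simpa [zElem, Units.smul_def] using h⟩

theorem zElem_mul_of_disjoint {i j i' j' : ℕ} (hi : 1 ≤ i) (hij : i < j) (hj : j ≤ n)
    (hi' : 1 ≤ i') (hij' : i' < j') (hj' : j' ≤ n) (hdisj : j < i' ∨ j' < i) :
    ∃ ε : ℤˣ, zElem n i j * zElem n i' j' = ε • (zElem n i' j' * zElem n i j) := by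
  have hinter : Set.Icc i j ∩ Set.Icc i' j' = ∅ := by
    ext x
    simp only [Set.mem_inter_iff, Set.mem_Icc, Set.mem_empty_iff_false, iff_false]
    omega
  have h := RingQuot.mkRingHom_rel (ZRel.disj i j i' j' hi hij hj hi' hij' hj' hinter)
  rw [map_zsmul, map_mul, map_mul] at h
  exact ⟨(-1) ^ ((j - i) * (j' - i')), by simpa [zElem, Units.smul_def] using h⟩

theorem zElem_mul_of_overlap {i j i' j' : ℕ} (hi : 1 ≤ i) (hj : j ≤ n) (hi' : 1 ≤ i') (hj' : j' ≤ n)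
    (hoverlap : (i < i' ∧ i' ≤ j ∧ j < j') ∨ (i' < i ∧ i ≤ j' ∧ j' < j)) :
    zElem n i j * zElem n i' j' = 0 := by
  have hne : (Set.Icc i j ∩ Set.Icc i' j').Nonempty :=
    ⟨max i i', by simp only [Set.mem_inter_iff, Set.mem_Icc]; omega⟩
  have hij : i < j := by omega
  have hij' : i' < j' := by omega
  have h := RingQuot.mkRingHom_rel (ZRel.overlap i j i' j' hi hij hj hi' hij' hj' hne
    (by rw [Set.Icc_subset_Icc_iff hij'.le]; omega) (by rw [Set.Icc_subset_Icc_iff hij.le]; omega))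
  rwa [map_mul, map_zero] at h

theorem intervalRelations_zElem : IntervalRelations n (zElem n) where
  mul_of_contains {i j i' j' i'' j''} hi hii' hij' hjj' hj hi'' hj'' := by
    obtain rfl : i'' = i + j - j' := by omega
    obtain rfl : j'' = i + j - i' := by omega
    exact zElem_mul_of_contains hi hii' hij' hjj' hj
  mul_of_disjoint := zElem_mul_of_disjoint
  mul_of_overlap := zElem_mul_of_overlap

theorem closure_zElem :
    Subring.closure {x | ∃ i j, 1 ≤ i ∧ i < j ∧ j ≤ n ∧ zElem n i j = x} = ⊤ := by
  refine eq_top_iff.mpr fun x _ => ?_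
  obtain ⟨r, rfl⟩ := RingQuot.mkRingHom_surjective (ZRel n) x
  induction r using FreeAlgebra.induction with
  | grade0 k =>
    rw [eq_intCast, map_intCast]
    exact intCast_mem _ k
  | grade1 p =>
    obtain ⟨⟨i, j⟩, h⟩ := p
    exact Subring.subset_closure ⟨i, j, h.1, h.2.1, h.2.2, by rw [zElem, zf_eq_ι h]⟩
  | mul r s hr hs =>
    rw [map_mul]
    exact mul_mem (hr trivial) (hs trivial)
  | add r s hr hs =>
    rw [map_add]
    exact add_mem (hr trivial) (hs trivial)

end Presentation

theorem indicator_mul_indicator_of_not_disjoint {ι α R : Type*} [PartialOrder α] [OrderBot α]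
    [MulZeroClass R] {S : Set ι} {f : ι → α} (hS : S.PairwiseDisjoint f) (u v : ι → R) {p q : ι}
    (hpq : p ≠ q) (hdisj : ¬ Disjoint (f p) (f q)) : S.indicator u p * S.indicator v q = 0 := by
  by_cases hp : p ∈ S
  · have hq : q ∉ S := fun hq => hdisj (hS hp hq hpq)
    rw [Set.indicator_of_notMem hq, mul_zero]
  · rw [Set.indicator_of_notMem hp, zero_mul]

theorem neg_one_pow_zsmul_of_charTwo {R : Type*} [Ring R] [CharP R 2] (k : ℕ) (x : R) :
    (-1 : ℤ) ^ k • x = x := by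
  rw [zsmul_eq_mul, Int.cast_pow, Int.cast_neg, Int.cast_one, CharTwo.neg_eq, one_pow, one_mul]

section Character

variable {n : ℕ} {S : Set (ℕ × ℕ)}

/-- The homomorphism from the free algebra to `ZMod 2` that sends the generators indexed by
elements of `S` to `1` and all others to `0`. -/
noncomputable def freeCharacter (n : ℕ) (S : Set (ℕ × ℕ)) : FreeAlgebra ℤ (ZIdx n) →+* ZMod 2 :=
  (FreeAlgebra.lift ℤ fun p : ZIdx n => S.indicator (1 : ℕ × ℕ → ZMod 2) p.1 :
    FreeAlgebra ℤ (ZIdx n) →ₐ[ℤ] ZMod 2)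

theorem freeCharacter_zf {i j : ℕ} (hi : 1 ≤ i) (hij : i < j) (hj : j ≤ n) :
    freeCharacter n S (zf n i j) = S.indicator 1 (i, j) := by
  rw [zf_eq_ι ⟨hi, hij, hj⟩, freeCharacter, RingHom.coe_coe, FreeAlgebra.lift_ι_apply]

theorem freeCharacter_zf_swap {i j : ℕ} (hi : 1 ≤ i) (hij : i < j) (hj : j ≤ n) :
    freeCharacter n S (zf n j i) = S.indicator 1 (i, j) := by
  rw [zf_swap hi hij hj, map_zsmul, neg_one_pow_zsmul_of_charTwo, freeCharacter_zf hi hij hj]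

theorem freeCharacter_eq_of_rel (hS : S.PairwiseDisjoint fun p => Set.Icc p.1 p.2)
    ⦃x y : FreeAlgebra ℤ (ZIdx n)⦄ (hxy : ZRel n x y) :
    freeCharacter n S x = freeCharacter n S y := by
  cases hxy with
  | contain i j i' j' hi hij hj hi' hij' hj' hsub =>
    rw [Set.Icc_subset_Icc_iff hij'.le] at hsub
    rw [map_zsmul, neg_one_pow_zsmul_of_charTwo, map_mul, map_mul, freeCharacter_zf hi hij hj,
      freeCharacter_zf hi' hij' hj', freeCharacter_zf_swap (by omega) (by omega) (by omega)]
    by_cases heq : (i, j) = (i', j')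
    · obtain ⟨rfl, rfl⟩ := Prod.mk.inj heq
      rw [Nat.add_sub_cancel, Nat.add_sub_cancel_left]
    · have hreversal : (i, j) ≠ (i + j - j', i + j - i') := by
        simp only [ne_eq, Prod.mk.injEq] at heq ⊢
        omega
      have hmeet : ¬ Disjoint (Set.Icc i j) (Set.Icc i' j') :=
        Set.not_disjoint_iff.mpr ⟨i', by simp only [Set.mem_Icc]; omega⟩
      have hmeet_reversal :
          ¬ Disjoint (Set.Icc i j) (Set.Icc (i + j - j') (i + j - i')) :=
        Set.not_disjoint_iff.mpr ⟨i + j - j', by simp only [Set.mem_Icc]; omega⟩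
      rw [indicator_mul_indicator_of_not_disjoint hS _ _ heq hmeet, mul_comm,
        indicator_mul_indicator_of_not_disjoint hS _ _ hreversal hmeet_reversal]
  | disj => rw [map_zsmul, neg_one_pow_zsmul_of_charTwo, map_mul, map_mul, mul_comm]
  | overlap i j i' j' hi hij hj hi' hij' hj' hne hnc =>
    have hneq : (i, j) ≠ (i', j') := by
      rintro ⟨⟩
      exact hnc subset_rfl
    rw [map_mul, map_zero, freeCharacter_zf hi hij hj, freeCharacter_zf hi' hij' hj',
      indicator_mul_indicator_of_not_disjoint hS _ _ hneq
        (Set.not_disjoint_iff_nonempty_inter.mpr hne)]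

/-- The homomorphism from `Z(n)` to `ZMod 2` that sends the generators indexed by a collection `S`
of pairwise disjoint intervals to `1` and all others to `0`. -/
noncomputable def character (hS : S.PairwiseDisjoint fun p => Set.Icc p.1 p.2) :
    Zring n →+* ZMod 2 :=
  RingQuot.lift ⟨freeCharacter n S, freeCharacter_eq_of_rel hS⟩

theorem character_zElem (hS : S.PairwiseDisjoint fun p => Set.Icc p.1 p.2) {i j : ℕ}
    (hi : 1 ≤ i) (hij : i < j) (hj : j ≤ n) (hmem : (i, j) ∈ S) :
    character hS (zElem n i j) = 1 := by
  rw [character, zElem, RingQuot.lift_mkRingHom_apply, freeCharacter_zf hi hij hj,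
    Set.indicator_of_mem hmem, Pi.one_apply]

theorem zElem_ne_zero {i j : ℕ} (hi : 1 ≤ i) (hij : i < j) (hj : j ≤ n) : zElem n i j ≠ 0 := by
  intro h
  have hχ := character_zElem (Set.pairwiseDisjoint_singleton (i, j) _) hi hij hj rfl
  rw [h, map_zero] at hχ
  exact zero_ne_one hχ

theorem zElem_mul_zElem_ne_zero {i j i' j' : ℕ} (hi : 1 ≤ i) (hij : i < j) (hji' : j < i')
    (hij' : i' < j') (hj' : j' ≤ n) : zElem n i j * zElem n i' j' ≠ 0 := by
  have hS : ({(i, j), (i', j')} : Set (ℕ × ℕ)).PairwiseDisjoint fun p => Set.Icc p.1 p.2 :=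
    Set.pairwise_pair_of_symm.mpr fun _ =>
      Set.disjoint_left.mpr fun x hx hx' => by
        simp only [Set.mem_Icc] at hx hx'
        omega
  intro h
  have hχ := congrArg (character hS) h
  rw [map_mul, map_zero, character_zElem hS hi hij (by omega) (.inl rfl),
    character_zElem hS (by omega) hij' hj' (.inr rfl), one_mul] at hχ
  exact one_ne_zero hχ

end Character

/-- For `n ≥ 4` the ring `Z(n)` is not prime: `a = z_{1,2} z_{n-1,n}` and
`b = z_{2,n-1}` are nonzero but `a * r * b = 0` for every `r`. -/
theorem Zring_not_prime (n : ℕ) (hn : 4 ≤ n) :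
    zElem n 1 2 * zElem n (n - 1) n ≠ 0 ∧
    zElem n 2 (n - 1) ≠ 0 ∧
    ∀ r : Zring n, (zElem n 1 2 * zElem n (n - 1) n) * r * zElem n 2 (n - 1) = 0 := by
  exact ⟨zElem_mul_zElem_ne_zero le_rfl (by omega) (by omega) (by omega) le_rfl,
    zElem_ne_zero (by omega) (by omega) (by omega),
    intervalRelations_zElem.ends_mul_mul_middle_eq_zero hn closure_zElem⟩
end

section
/- For n = 3, the ring Z(3) is prime: for all nonzero elements a, b of Z(3) there exists r ∈ Z(3) such that a·r·b ≠ 0. (Here Z(3) is generated by x = z_{1,2}, y = z_{2,3}, z = z_{1,3} with relations xy = yx = 0, xz + zy = 0, yz + zx = 0.) -/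
/-!
With `x = z₁₂`, `y = z₃₂ = -z₂₃` and `z = z₁₃` the ring `Z(3)` has the sign-free presentation
`x y = y x = 0`, `z x = y z`, `z y = x z`, so that it is spanned by the words `xᵐ zᵏ` and `yᵐ zᵏ`.
It is represented over `ℤ[s, t]` by `x ↦ diag(s, 0)`, `y ↦ diag(0, s)` and `z ↦ t · swap`. Applied
to the vector `(1, 1)`, the words with `m > 0` give `(sᵐ tᵏ, 0)` and `(0, sᵐ tᵏ)`, while `zᵏ` gives
`(tᵏ, tᵏ)`; these are linearly independent, so the representation is faithful. Its image contains
a nonzero multiple of every matrix unit, and a subring of a matrix ring over a domain is prime as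
soon as it contains such multiples.
-/

open Matrix MvPolynomial

theorem exists_mul_mul_ne_zero_of_injective_matrix {S R n : Type*} [Semiring S] [Semiring R]
    [NoZeroDivisors R] [Fintype n] [DecidableEq n] {φ : S →+* Matrix n n R}
    (hφ : Function.Injective φ) (hunits : ∀ j k, ∃ r c, c ≠ 0 ∧ φ r = Matrix.single j k c)
    {a b : S} (ha : a ≠ 0) (hb : b ≠ 0) : ∃ r, a * r * b ≠ 0 := by
  have exists_entry_ne_zero {u : S} (hu : u ≠ 0) : ∃ i j, φ u i j ≠ 0 := by
    contrapose! hu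
    exact (map_eq_zero_iff φ hφ).1 (Matrix.ext hu)
  obtain ⟨i, j, hij⟩ := exists_entry_ne_zero ha
  obtain ⟨k, l, hkl⟩ := exists_entry_ne_zero hb
  obtain ⟨r, c, hc, hr⟩ := hunits j k
  have entry_eq : φ (a * r * b) i l = φ a i j * c * φ b k l := by
    rw [map_mul, map_mul, hr, Matrix.mul_apply, Finset.sum_eq_single k]
    · rw [mul_single_apply_same]
    · intro q _ hq
      rw [mul_single_apply_of_ne _ _ _ _ _ hq, zero_mul]
    · exact fun hk => absurd (Finset.mem_univ k) hk
  refine ⟨r, fun h => mul_ne_zero (mul_ne_zero hij hc) hkl ?_⟩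
  rw [← entry_eq, h, map_zero, Matrix.zero_apply]

theorem eq_zero_or_eq_pow_mul_pow_of_mem_closure {M : Type*} [MonoidWithZero M] {x y z w : M}
    (hxy : x * y = 0) (hyx : y * x = 0) (hzx : SemiconjBy z x y) (hzy : SemiconjBy z y x)
    (hw : w ∈ Submonoid.closure {x, y, z}) :
    w = 0 ∨ (∃ m k, w = x ^ m * z ^ k) ∨ ∃ m k, w = y ^ m * z ^ k := by
  induction hw using Submonoid.closure_induction_left with
  | one => exact .inr (.inl ⟨0, 0, by simp⟩)
  | mul_left g hg w _ ih =>
    obtain rfl | ⟨m, k, rfl⟩ | ⟨m, k, rfl⟩ := ih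
    · simp
    · obtain rfl | rfl | rfl := hg
      · exact .inr (.inl ⟨m + 1, k, by rw [pow_succ', mul_assoc]⟩)
      · cases m with
        | zero => exact .inr (.inr ⟨1, k, by simp⟩)
        | succ m => exact .inl (by rw [pow_succ', ← mul_assoc, ← mul_assoc, hyx]; simp)
      · exact .inr (.inr ⟨m, k + 1, by
          rw [← mul_assoc, (hzx.pow_right m).eq, mul_assoc, pow_succ']⟩)
    · obtain rfl | rfl | rfl := hg
      · cases m with
        | zero => exact .inr (.inl ⟨1, k, by simp⟩)
        | succ m => exact .inl (by rw [pow_succ', ← mul_assoc, ← mul_assoc, hxy]; simp)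
      · exact .inr (.inr ⟨m + 1, k, by rw [pow_succ', mul_assoc]⟩)
      · exact .inr (.inl ⟨m, k + 1, by
          rw [← mul_assoc, (hzy.pow_right m).eq, mul_assoc, pow_succ']⟩)

/-- The additive map out of `ℤ[s, t]`, `s = X 0` and `t = X 1`, sending `sᵐ tᵏ` to `f m k`. -/
noncomputable def monomialLift {M : Type*} [AddCommGroup M] (f : ℕ → ℕ → M) :
    MvPolynomial (Fin 2) ℤ →+ M :=
  ((basisMonomials (Fin 2) ℤ).constr ℤ fun d => f (d 0) (d 1)).toAddMonoidHom

theorem monomialLift_X_pow_mul_X_pow {M : Type*} [AddCommGroup M] (f : ℕ → ℕ → M) (m k : ℕ) :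
    monomialLift f (X 0 ^ m * X 1 ^ k) = f m k := by
  have monomial_eq : (X 0 ^ m * X 1 ^ k : MvPolynomial (Fin 2) ℤ) =
      basisMonomials (Fin 2) ℤ (Finsupp.single 0 m + Finsupp.single 1 k) := by
    simp [X_pow_eq_monomial, monomial_mul]
  rw [monomial_eq, monomialLift, LinearMap.toAddMonoidHom_coe, Module.Basis.constr_basis]
  simp

namespace Zring

theorem closure_range_zElem (n : ℕ) :
    Subring.closure (Set.range fun p : ZIdx n => zElem n p.1.1 p.1.2) = ⊤ := by
  refine (Subring.eq_top_iff' _).2 fun a => ?_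
  obtain ⟨f, rfl⟩ := RingQuot.mkRingHom_surjective (ZRel n) a
  induction f using FreeAlgebra.induction with
  | grade0 r => simp
  | grade1 p =>
    refine Subring.subset_closure ⟨p, ?_⟩
    simp only [zElem, zf, dif_pos p.2]
  | mul f g hf hg => simpa using mul_mem hf hg
  | add f g hf hg => simpa using add_mem hf hg

theorem zElem_swap {n i j : ℕ} (hi : 1 ≤ i) (hij : i < j) (hj : j ≤ n) :
    zElem n j i = (-1 : ℤ) ^ (j - i) • zElem n i j := by
  simp [zElem, zf, hi, hij, hj, hij.not_gt]

theorem zElem_mul_zElem_of_subset {n i j i' j' : ℕ} (hi : 1 ≤ i) (hij : i < j) (hj : j ≤ n)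
    (hi' : 1 ≤ i') (hij' : i' < j') (hj' : j' ≤ n) (h : Set.Icc i' j' ⊆ Set.Icc i j) :
    zElem n i j * zElem n i' j' =
      (-1 : ℤ) ^ ((j - i) * (j' - i')) • (zElem n (i + j - i') (i + j - j') * zElem n i j) := by
  simpa [zElem] using RingQuot.mkRingHom_rel (ZRel.contain i j i' j' hi hij hj hi' hij' hj' h)

theorem zElem_mul_zElem_of_overlap {n i j i' j' : ℕ} (hi : 1 ≤ i) (hij : i < j) (hj : j ≤ n)
    (hi' : 1 ≤ i') (hij' : i' < j') (hj' : j' ≤ n) (h : (Set.Icc i j ∩ Set.Icc i' j').Nonempty)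
    (h₁ : ¬ Set.Icc i' j' ⊆ Set.Icc i j) (h₂ : ¬ Set.Icc i j ⊆ Set.Icc i' j') :
    zElem n i j * zElem n i' j' = 0 := by
  simpa [zElem] using
    RingQuot.mkRingHom_rel (ZRel.overlap i j i' j' hi hij hj hi' hij' hj' h h₁ h₂)

theorem zElem_three_two : zElem 3 3 2 = -zElem 3 2 3 := by
  simpa using zElem_swap (n := 3) (i := 2) (j := 3)

theorem zElem_one_two_mul_zElem_three_two : zElem 3 1 2 * zElem 3 3 2 = 0 := by
  have overlap : zElem 3 1 2 * zElem 3 2 3 = 0 := by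
    refine zElem_mul_zElem_of_overlap ?_ ?_ ?_ ?_ ?_ ?_ ⟨2, ?_⟩ ?_ ?_ <;>
      simp [Set.Icc_subset_Icc_iff]
  rw [zElem_swap one_le_two (by simp) le_rfl, mul_smul_comm, overlap, zsmul_zero]

theorem zElem_three_two_mul_zElem_one_two : zElem 3 3 2 * zElem 3 1 2 = 0 := by
  have overlap : zElem 3 2 3 * zElem 3 1 2 = 0 := by
    refine zElem_mul_zElem_of_overlap ?_ ?_ ?_ ?_ ?_ ?_ ⟨2, ?_⟩ ?_ ?_ <;>
      simp [Set.Icc_subset_Icc_iff]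
  rw [zElem_swap one_le_two (by simp) le_rfl, smul_mul_assoc, overlap, zsmul_zero]

theorem semiconjBy_zElem_one_two_zElem_three_two :
    SemiconjBy (zElem 3 1 3) (zElem 3 1 2) (zElem 3 3 2) := by
  have contain := zElem_mul_zElem_of_subset (n := 3) (i := 1) (j := 3) (i' := 1) (j' := 2)
  simpa [Set.Icc_subset_Icc_iff, SemiconjBy] using contain

theorem semiconjBy_zElem_three_two_zElem_one_two :
    SemiconjBy (zElem 3 1 3) (zElem 3 3 2) (zElem 3 1 2) := by
  have contain : zElem 3 1 3 * zElem 3 2 3 = zElem 3 2 1 * zElem 3 1 3 := by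
    have h := zElem_mul_zElem_of_subset (n := 3) (i := 1) (j := 3) (i' := 2) (j' := 3)
    simpa [Set.Icc_subset_Icc_iff] using h
  rw [SemiconjBy, zElem_swap one_le_two (by simp) le_rfl, mul_smul_comm, contain,
    zElem_swap le_rfl one_lt_two (by simp), smul_mul_assoc, smul_smul]
  simp

theorem eq_of_lt_of_le_three {i j : ℕ} (hi : 1 ≤ i) (hij : i < j) (hj : j ≤ 3) :
    (i = 1 ∧ j = 2) ∨ (i = 2 ∧ j = 3) ∨ (i = 1 ∧ j = 3) := by
  omega

theorem closure_zElem_three :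
    Subring.closure {zElem 3 1 2, zElem 3 3 2, zElem 3 1 3} = ⊤ := by
  rw [eq_top_iff, ← closure_range_zElem, Subring.closure_le]
  rintro _ ⟨⟨⟨i, j⟩, hi, hij, hj⟩, rfl⟩
  obtain ⟨rfl, rfl⟩ | ⟨rfl, rfl⟩ | ⟨rfl, rfl⟩ := eq_of_lt_of_le_three hi hij hj
  · exact Subring.subset_closure (by simp)
  · have neg_mem : -zElem 3 2 3 ∈ Subring.closure {zElem 3 1 2, zElem 3 3 2, zElem 3 1 3} :=
      zElem_three_two ▸ Subring.subset_closure (by simp)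
    exact neg_mem_iff.1 neg_mem
  · exact Subring.subset_closure (by simp)

/-- The words `xᵐ zᵏ` and `yᵐ zᵏ` in `x = z₁₂`, `y = z₃₂` and `z = z₁₃`. -/
def normalWords : Set (Zring 3) :=
  {w | (∃ m k, w = zElem 3 1 2 ^ m * zElem 3 1 3 ^ k) ∨
    ∃ m k, w = zElem 3 3 2 ^ m * zElem 3 1 3 ^ k}

theorem closure_normalWords : AddSubgroup.closure normalWords = ⊤ := by
  refine (AddSubgroup.eq_top_iff' _).2 fun a => ?_
  have ha : a ∈ Subring.closure {zElem 3 1 2, zElem 3 3 2, zElem 3 1 3} :=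
    closure_zElem_three ▸ Subring.mem_top a
  refine (AddSubgroup.closure_le _).2 (fun w hw => ?_) (Subring.mem_closure_iff.1 ha)
  obtain rfl | hw := eq_zero_or_eq_pow_mul_pow_of_mem_closure zElem_one_two_mul_zElem_three_two
    zElem_three_two_mul_zElem_one_two semiconjBy_zElem_one_two_zElem_three_two
    semiconjBy_zElem_three_two_zElem_one_two hw
  · exact zero_mem _
  · exact AddSubgroup.subset_closure hw

section Lift

variable {A : Type*} [Ring A]

/-- The homomorphism from the free algebra on `z₁₂`, `z₂₃`, `z₁₃` with `z₁₂ ↦ x`, `z₃₂ ↦ y` and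
`z₁₃ ↦ z`; as `z₃₂ = -z₂₃`, the generator `z₂₃` goes to `-y`. -/
noncomputable def freeLift (x y z : A) : FreeAlgebra ℤ (ZIdx 3) →ₐ[ℤ] A :=
  FreeAlgebra.lift ℤ fun p => if p.1 = (1, 2) then x else if p.1 = (2, 3) then -y else z

theorem freeLift_eq_of_zRel {x y z : A} (hxy : x * y = 0) (hyx : y * x = 0)
    (hzx : SemiconjBy z x y) (hzy : SemiconjBy z y x) {f g : FreeAlgebra ℤ (ZIdx 3)}
    (h : ZRel 3 f g) : freeLift x y z f = freeLift x y z g := by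
  cases h with
  | contain i j i' j' hi hij hj hi' hij' hj' h =>
    rw [Set.Icc_subset_Icc_iff hij'.le] at h
    obtain ⟨rfl, rfl⟩ | ⟨rfl, rfl⟩ | ⟨rfl, rfl⟩ := eq_of_lt_of_le_three hi hij hj <;>
    obtain ⟨rfl, rfl⟩ | ⟨rfl, rfl⟩ | ⟨rfl, rfl⟩ := eq_of_lt_of_le_three hi' hij' hj' <;>
    first
    | omega
    | simp [zf, freeLift, hzx.eq, hzy.eq]
  | disj i j i' j' hi hij hj hi' hij' hj' h =>
    have two_mem : 2 ∈ Set.Icc i j ∩ Set.Icc i' j' := by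
      simp only [Set.mem_inter_iff, Set.mem_Icc]; omega
    simp [h] at two_mem
  | overlap i j i' j' hi hij hj hi' hij' hj' _ h₁ h₂ =>
    rw [Set.Icc_subset_Icc_iff hij'.le] at h₁
    rw [Set.Icc_subset_Icc_iff hij.le] at h₂
    obtain ⟨rfl, rfl⟩ | ⟨rfl, rfl⟩ | ⟨rfl, rfl⟩ := eq_of_lt_of_le_three hi hij hj <;>
    obtain ⟨rfl, rfl⟩ | ⟨rfl, rfl⟩ | ⟨rfl, rfl⟩ := eq_of_lt_of_le_three hi' hij' hj' <;>
    first
    | omega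
    | simp [zf, freeLift, hxy, hyx]

theorem exists_ringHom_zElem_eq {x y z : A} (hxy : x * y = 0) (hyx : y * x = 0)
    (hzx : SemiconjBy z x y) (hzy : SemiconjBy z y x) :
    ∃ φ : Zring 3 →+* A, φ (zElem 3 1 2) = x ∧ φ (zElem 3 3 2) = y ∧ φ (zElem 3 1 3) = z := by
  refine ⟨RingQuot.lift ⟨(freeLift x y z : FreeAlgebra ℤ (ZIdx 3) →+* A),
    fun _ _ => freeLift_eq_of_zRel hxy hyx hzx hzy⟩, ?_, ?_, ?_⟩ <;>
  refine (RingQuot.lift_mkRingHom_apply _ _ _).trans ?_ <;> simp [zf, freeLift]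

end Lift

section MatrixRep

variable {R : Type*} [CommRing R]

theorem exists_matrixRep (s t : R) : ∃ φ : Zring 3 →+* Matrix (Fin 2) (Fin 2) R,
    φ (zElem 3 1 2) = diagonal ![s, 0] ∧ φ (zElem 3 3 2) = diagonal ![0, s] ∧
      φ (zElem 3 1 3) = !![0, t; t, 0] := by
  refine exists_ringHom_zElem_eq ?_ ?_ ?_ ?_
  · rw [diagonal_mul_diagonal]; ext i j; fin_cases i <;> fin_cases j <;> simp
  · rw [diagonal_mul_diagonal]; ext i j; fin_cases i <;> fin_cases j <;> simp
  · simp [SemiconjBy, diagonal_fin_two, mul_comm]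
  · simp [SemiconjBy, diagonal_fin_two, mul_comm]

/-- The representation of `Z(3)` on `R²` with parameters `s` and `t`, given by `z₁₂ ↦ diag(s, 0)`,
`z₃₂ ↦ diag(0, s)` and `z₁₃ ↦ t · swap`. -/
noncomputable def matrixRep (s t : R) : Zring 3 →+* Matrix (Fin 2) (Fin 2) R :=
  (exists_matrixRep s t).choose

variable (s t : R)

theorem matrixRep_zElem_one_two : matrixRep s t (zElem 3 1 2) = diagonal ![s, 0] :=
  (exists_matrixRep s t).choose_spec.1

theorem matrixRep_zElem_three_two : matrixRep s t (zElem 3 3 2) = diagonal ![0, s] :=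
  (exists_matrixRep s t).choose_spec.2.1

theorem matrixRep_zElem_one_three : matrixRep s t (zElem 3 1 3) = !![0, t; t, 0] :=
  (exists_matrixRep s t).choose_spec.2.2

theorem exists_matrixRep_eq_single [NoZeroDivisors R] {s t : R} (hs : s ≠ 0) (ht : t ≠ 0)
    (j k : Fin 2) : ∃ r c, c ≠ 0 ∧ matrixRep s t r = Matrix.single j k c := by
  have hst : s * t ≠ 0 := mul_ne_zero hs ht
  have hx := matrixRep_zElem_one_two s t
  have hy := matrixRep_zElem_three_two s t
  have hz := matrixRep_zElem_one_three s t
  fin_cases j <;> fin_cases k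
  · refine ⟨zElem 3 1 2, s, hs, ?_⟩
    ext i j; fin_cases i <;> fin_cases j <;> simp [hx]
  · refine ⟨zElem 3 1 2 * zElem 3 1 3, s * t, hst, ?_⟩
    ext i j; fin_cases i <;> fin_cases j <;> simp [hx, hz]
  · refine ⟨zElem 3 3 2 * zElem 3 1 3, s * t, hst, ?_⟩
    ext i j; fin_cases i <;> fin_cases j <;> simp [hy, hz]
  · refine ⟨zElem 3 3 2, s, hs, ?_⟩
    ext i j; fin_cases i <;> fin_cases j <;> simp [hy]

/-- The orbit map of the vector `(1, 1)` under `matrixRep s t`. -/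
noncomputable def orbitMap (s t : R) : Zring 3 →+ (Fin 2 → R) where
  toFun a := matrixRep s t a *ᵥ 1
  map_zero' := by simp
  map_add' := by simp [add_mulVec]

theorem orbitMap_apply (a : Zring 3) : orbitMap s t a = matrixRep s t a *ᵥ 1 := rfl

theorem matrixRep_zElem_one_three_pow_mulVec_one (k : ℕ) :
    matrixRep s t (zElem 3 1 3) ^ k *ᵥ 1 = fun _ => t ^ k := by
  induction k with
  | zero => ext; simp
  | succ k ih =>
    rw [pow_succ', ← mulVec_mulVec, ih, matrixRep_zElem_one_three]
    ext i; fin_cases i <;> simp [pow_succ', mulVec, dotProduct]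

theorem orbitMap_zElem_one_two_pow_mul (m k : ℕ) :
    orbitMap s t (zElem 3 1 2 ^ m * zElem 3 1 3 ^ k) = ![s ^ m * t ^ k, 0 ^ m * t ^ k] := by
  rw [orbitMap_apply, map_mul, map_pow, map_pow, ← mulVec_mulVec,
    matrixRep_zElem_one_three_pow_mulVec_one, matrixRep_zElem_one_two, diagonal_pow]
  ext i; fin_cases i <;> simp [mulVec_diagonal]

theorem orbitMap_zElem_three_two_pow_mul (m k : ℕ) :
    orbitMap s t (zElem 3 3 2 ^ m * zElem 3 1 3 ^ k) = ![0 ^ m * t ^ k, s ^ m * t ^ k] := by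
  rw [orbitMap_apply, map_mul, map_pow, map_pow, ← mulVec_mulVec,
    matrixRep_zElem_one_three_pow_mulVec_one, matrixRep_zElem_three_two, diagonal_pow]
  ext i; fin_cases i <;> simp [mulVec_diagonal]

end MatrixRep

/-- A left inverse of the orbit map for the generic parameters `s = X 0` and `t = X 1`, reading off
the coefficients of the words `xᵐ zᵏ` from the first coordinate and those of the words `yᵐ zᵏ` with
`m > 0` from the second; the words `zᵏ`, seen in both coordinates, are counted only in the first. -/
noncomputable def ofOrbit : (Fin 2 → MvPolynomial (Fin 2) ℤ) →+ Zring 3 :=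
  (monomialLift fun m k => zElem 3 1 2 ^ m * zElem 3 1 3 ^ k).comp (Pi.evalAddMonoidHom _ 0) +
    (monomialLift fun m k => if m = 0 then 0 else zElem 3 3 2 ^ m * zElem 3 1 3 ^ k).comp
      (Pi.evalAddMonoidHom _ 1)

theorem ofOrbit_comp_orbitMap : ofOrbit.comp (orbitMap (X 0) (X 1)) = AddMonoidHom.id _ := by
  have monomialLift_X_pow (f : ℕ → ℕ → Zring 3) (k : ℕ) : monomialLift f (X 1 ^ k) = f 0 k := by
    simpa using monomialLift_X_pow_mul_X_pow f 0 k
  refine AddMonoidHom.eq_of_eqOn_dense closure_normalWords ?_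
  rintro _ (⟨m, k, rfl⟩ | ⟨m, k, rfl⟩)
  · rw [AddMonoidHom.comp_apply, orbitMap_zElem_one_two_pow_mul]
    cases m <;> simp [ofOrbit, monomialLift_X_pow_mul_X_pow, monomialLift_X_pow]
  · rw [AddMonoidHom.comp_apply, orbitMap_zElem_three_two_pow_mul]
    cases m <;> simp [ofOrbit, monomialLift_X_pow_mul_X_pow, monomialLift_X_pow]

theorem orbitMap_injective :
    Function.Injective (orbitMap (X 0 : MvPolynomial (Fin 2) ℤ) (X 1)) :=
  Function.LeftInverse.injective (g := ofOrbit) fun a =>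
    DFunLike.congr_fun ofOrbit_comp_orbitMap a

theorem matrixRep_injective :
    Function.Injective (matrixRep (X 0 : MvPolynomial (Fin 2) ℤ) (X 1)) :=
  fun _ _ h => orbitMap_injective (congrArg (· *ᵥ 1) h)

end Zring

/-- The ring `Z(3)` is prime: for all nonzero `a, b` there is `r`
with `a * r * b ≠ 0`. -/
theorem Zring_three_prime :
    ∀ a b : Zring 3, a ≠ 0 → b ≠ 0 → ∃ r : Zring 3, a * r * b ≠ 0 := fun _ _ =>
  exists_mul_mul_ne_zero_of_injective_matrix Zring.matrixRep_injective
    (Zring.exists_matrixRep_eq_single (X_ne_zero 0) (X_ne_zero 1))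
end

section
/- Let J be the two-sided ideal of N(n) generated by the elements Y_1, …, Y_{n−1}. Then J^{n(n−1)/2 + 1} = 0, and for every integer m ≥ 0 the quotient ring N(n)/J^m is a free ℤ-module. -/
/-- Index type for the generators `Y_1, …, Y_{n-1}` of the nilCoxeter algebra `N(n)`. -/
abbrev NIdx (n : ℕ) := {i : ℕ // 1 ≤ i ∧ i + 1 ≤ n}

/-- The generator `Y_i` in the free algebra (junk value `0` outside `1 ≤ i ≤ n-1`). -/
noncomputable def Yf (n : ℕ) (i : ℕ) : FreeAlgebra ℤ (NIdx n) :=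
  if h : 1 ≤ i ∧ i + 1 ≤ n then FreeAlgebra.ι ℤ ⟨i, h⟩ else 0

/-- The defining relations of the nilCoxeter algebra `N(n)` of the symmetric group `S_n`:
`Y_i² = 0`, the braid relations `Y_i Y_{i+1} Y_i = Y_{i+1} Y_i Y_{i+1}`, and the
commutation relations `Y_i Y_j = Y_j Y_i` for `|i - j| ≥ 2`. -/
inductive NRel (n : ℕ) : FreeAlgebra ℤ (NIdx n) → FreeAlgebra ℤ (NIdx n) → Prop
  | sq (i : NIdx n) : NRel n (FreeAlgebra.ι ℤ i * FreeAlgebra.ι ℤ i) 0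
  | braid (i j : NIdx n) (h : j.1 = i.1 + 1) :
      NRel n (FreeAlgebra.ι ℤ i * FreeAlgebra.ι ℤ j * FreeAlgebra.ι ℤ i)
        (FreeAlgebra.ι ℤ j * FreeAlgebra.ι ℤ i * FreeAlgebra.ι ℤ j)
  | comm (i j : NIdx n) (h : i.1 + 2 ≤ j.1 ∨ j.1 + 2 ≤ i.1) :
      NRel n (FreeAlgebra.ι ℤ i * FreeAlgebra.ι ℤ j)
        (FreeAlgebra.ι ℤ j * FreeAlgebra.ι ℤ i)

/-- The nilCoxeter algebra `N(n)` of the symmetric group `S_n` over `ℤ`. -/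
abbrev Nring (n : ℕ) := RingQuot (NRel n)

/-- The image of the generator `Y_i` in `N(n)`. -/
noncomputable def Ygen (n : ℕ) (i : ℕ) : Nring n :=
  RingQuot.mkRingHom (NRel n) (Yf n i)

/-- `Y_{[i,j]} = Y_{j-1} Y_{j-2} ⋯ Y_{i+1} Y_i`, with `Y_{[i,i]} = 1`. -/
noncomputable def Yint (n : ℕ) (i j : ℕ) : Nring n :=
  (((List.range' i (j - i)).reverse).map (Ygen n)).prod

/-- `Y_{[i,j];k} = Y_{[i,j+1-k]} Y_{[i+1,j+2-k]} ⋯ Y_{[i+k-1,j]}`, with `Y_{[i,j];0} = 1`. -/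
noncomputable def Yintk (n : ℕ) (i j k : ℕ) : Nring n :=
  ((List.range k).map fun t => Yint n (i + t) (j + 1 - k + t)).prod

/-- The two-sided ideal `J` of `N(n)` generated by `Y_1, …, Y_{n-1}`, regarded as a
ℤ-submodule (it is spanned by the elements `x · Y_i · y`). -/
noncomputable def Jaug (n : ℕ) : Submodule ℤ (Nring n) :=
  Submodule.span ℤ {a | ∃ (x y : Nring n) (i : ℕ), 1 ≤ i ∧ i + 1 ≤ n ∧ a = x * Ygen n i * y}

/-!
Left multiplication by a generator turns the product of a normal word into `0` or into the product
of a normal word one letter longer. Hence every product of `d` generators is zero or the product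
of a normal word of length `d`, and `J ^ m`, for `0 < m`, is spanned by the normal words of length
at least `m`. A normal word has at most `n (n - 1) / 2` letters, so high powers of `J` vanish.

In the left regular representation on permutations, distinct normal words send the identity to
distinct permutations, so their products are linearly independent and form a basis of `N(n)`.
Each power of `J` is then spanned by part of a basis, and its quotient is free. The zeroth power
obeys the same pattern: in the semiring of submodules `J ^ 0` is not the whole ring but the span of
`1`, which is the product of the empty word.
-/

namespace NilCoxeter

open Equiv (Perm swap)

theorem free_quotient_span_image {ι R V : Type*} [Ring R] [AddCommGroup V] [Module R V]
    (b : Module.Basis ι R V) (s : Set ι) :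
    Module.Free R (V ⧸ Submodule.span R (b '' s)) := by
  have complement := b.linearIndependent.isCompl_span_image b.span_eq (isCompl_compl (x := s))
  have indep_compl : LinearIndependent R fun i : ↥sᶜ ↦ b i :=
    b.linearIndependent.comp _ Subtype.val_injective
  rw [Set.image_eq_range b sᶜ] at complement
  exact .of_basis ((Module.Basis.span indep_compl).map
    (Submodule.quotientEquivOfIsCompl _ _ complement).symm)

section WordSpan

variable {ι k A : Type*} [CommSemiring k] [Semiring A] [Algebra k A]

variable (k) in
/-- The span of the products of words of length at least `m` in the family `Y`: the `m`-th step
of the filtration of an algebra by word length. -/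
def wordSpan (Y : ι → A) (m : ℕ) : Submodule k A :=
  Submodule.span k ((fun l : List ι ↦ (l.map Y).prod) '' {l | m ≤ l.length})

theorem prod_mem_wordSpan (Y : ι → A) {m : ℕ} {l : List ι} (hl : m ≤ l.length) :
    (l.map Y).prod ∈ wordSpan k Y m :=
  Submodule.subset_span ⟨l, hl, rfl⟩

theorem wordSpan_mul (Y : ι → A) (m m' : ℕ) :
    wordSpan k Y m * wordSpan k Y m' = wordSpan k Y (m + m') := by
  apply le_antisymm
  · rw [wordSpan, wordSpan, Submodule.span_mul_span, Submodule.span_le]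
    rintro _ ⟨_, ⟨l, hl, rfl⟩, _, ⟨l', hl', rfl⟩, rfl⟩
    simpa using prod_mem_wordSpan (k := k) Y (l := l ++ l')
      (by simpa using Nat.add_le_add hl hl')
  · rw [wordSpan, Submodule.span_le]
    rintro _ ⟨l, hl, rfl⟩
    have hl : m + m' ≤ l.length := hl
    have split : (l.map Y).prod = ((l.take m).map Y).prod * ((l.drop m).map Y).prod := by
      rw [← List.prod_append, ← List.map_append, List.take_append_drop]
    simp only [split]
    exact Submodule.mul_mem_mul
      (prod_mem_wordSpan Y (by simp only [List.length_take]; omega))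
      (prod_mem_wordSpan Y (by simp only [List.length_drop]; omega))

theorem wordSpan_one_pow_succ (Y : ι → A) (m : ℕ) :
    wordSpan k Y 1 ^ (m + 1) = wordSpan k Y (m + 1) := by
  induction m with
  | zero => rw [zero_add, pow_one]
  | succ m ih => rw [pow_succ, ih, wordSpan_mul]

theorem wordSpan_zero {Y : ι → A} (hgen : Algebra.adjoin k (Set.range Y) = ⊤) :
    wordSpan k Y 0 = ⊤ := by
  rw [eq_top_iff, ← Algebra.top_toSubmodule, ← hgen, Algebra.adjoin_eq_span, Submodule.span_le]
  intro x hx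
  obtain ⟨l, hl, rfl⟩ := Submonoid.exists_list_of_mem_closure hx
  obtain ⟨l, rfl⟩ : l ∈ Set.range (List.map Y) := by rwa [Set.range_list_map]
  exact prod_mem_wordSpan Y l.length.zero_le

end WordSpan

section NormalWord

/-- The normal words in the letters `1, …, m`: concatenations `r_m ⋯ r_2 r_1` in which `r_j` is
a possibly empty run `a, a + 1, …, j` of consecutive letters ending at `j`, with `1 ≤ a`. They are
reduced words, one for each element of the symmetric group `S_{m+1}`. -/
inductive IsNormalWord : ℕ → List ℕ → Prop
  | nil : IsNormalWord 0 []
  | run_append {m a r : ℕ} {w : List ℕ} (ha : 1 ≤ a) (har : a + r = m + 2)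
      (hw : IsNormalWord m w) : IsNormalWord (m + 1) (List.range' a r ++ w)

/-- The type of normal words in the letters `1, …, m`, which indexes a basis of `N(m + 1)`. -/
abbrev NormalWord (m : ℕ) := {w : List ℕ // IsNormalWord m w}

theorem isNormalWord_nil (m : ℕ) : IsNormalWord m [] := by
  induction m with
  | zero => exact .nil
  | succ m ih => exact .run_append (a := m + 2) (r := 0) (by omega) rfl ih

theorem IsNormalWord.length_le {m : ℕ} {w : List ℕ} (hw : IsNormalWord m w) :
    w.length ≤ (m + 1) * m / 2 := by
  induction hw with
  | nil => simp
  | @run_append m a r w ha har _ ih =>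
    have triangle := Nat.triangle_succ (m + 1)
    simp only [Nat.add_sub_cancel] at triangle
    rw [List.length_append, List.length_range', triangle]
    omega

theorem IsNormalWord.mem_Icc {m i : ℕ} {w : List ℕ} (hw : IsNormalWord m w) (hi : i ∈ w) :
    i ∈ Set.Icc 1 m := by
  rw [Set.mem_Icc]
  induction hw with
  | nil => simp at hi
  | run_append ha har _ ih =>
    rcases List.mem_append.1 hi with hi | hi
    · rw [List.mem_range'_1] at hi
      omega
    · have := ih hi
      omega

end NormalWord

/-- The element `x` is zero or the product over `Y` of a normal word of length `d` in the letters
`1, …, m`; this is what left multiplication by a generator preserves. -/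
def IsZeroOrNormalProd {A : Type*} [MonoidWithZero A] (Y : ℕ → A) (m d : ℕ) (x : A) : Prop :=
  x = 0 ∨ ∃ w, IsNormalWord m w ∧ w.length = d ∧ (w.map Y).prod = x

theorem IsZeroOrNormalProd.run_mul {A : Type*} [MonoidWithZero A] {Y : ℕ → A} {m d a r : ℕ}
    {x : A} (hx : IsZeroOrNormalProd Y m d x) (ha : 1 ≤ a) (har : a + r = m + 2) :
    IsZeroOrNormalProd Y (m + 1) (r + d) (((List.range' a r).map Y).prod * x) := by
  obtain rfl | ⟨w, hw, rfl, rfl⟩ := hx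
  · exact .inl (mul_zero _)
  · exact .inr ⟨_, .run_append ha har hw, by simp, by simp⟩

/-- A sequence satisfying the nilCoxeter relations. The generators of `N(n)`, continued by zero,
form such a sequence, and so do the operators `ascentOp`. -/
structure IsNilCoxeterFamily {A : Type*} [MonoidWithZero A] (Y : ℕ → A) : Prop where
  sq (i : ℕ) : Y i * Y i = 0
  braid (i : ℕ) : Y i * Y (i + 1) * Y i = Y (i + 1) * Y i * Y (i + 1)
  comm {i j : ℕ} (hij : i + 2 ≤ j) : Commute (Y i) (Y j)

namespace IsNilCoxeterFamily

section Reduction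

variable {A : Type*} [MonoidWithZero A] {Y : ℕ → A} (hY : IsNilCoxeterFamily Y)

include hY

theorem commute_prod {i : ℕ} {l : List ℕ} (hl : ∀ j ∈ l, i + 2 ≤ j ∨ j + 2 ≤ i) :
    Commute (Y i) (l.map Y).prod := by
  apply Commute.list_prod_right
  simp only [List.mem_map, forall_exists_index, and_imp, forall_apply_eq_imp_iff₂]
  exact fun j hj ↦ (hl j hj).elim hY.comm fun h ↦ (hY.comm h).symm

theorem mul_run_self (a r : ℕ) : Y a * ((List.range' a (r + 1)).map Y).prod = 0 := by
  rw [List.range'_succ, List.map_cons, List.prod_cons, ← mul_assoc, hY.sq, zero_mul]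

theorem succ_mul_run {a r j : ℕ} (haj : a ≤ j) (hjr : j + 1 < a + r) :
    Y (j + 1) * ((List.range' a r).map Y).prod = ((List.range' a r).map Y).prod * Y j := by
  obtain ⟨p, rfl⟩ := Nat.exists_eq_add_of_le haj
  obtain ⟨q, rfl⟩ : ∃ q, r = p + (q + 2) := ⟨r - p - 2, by omega⟩
  set lower := ((List.range' a p).map Y).prod
  set upper := ((List.range' (a + p + 1 + 1) q).map Y).prod
  have split : ((List.range' a (p + (q + 2))).map Y).prod =
      lower * (Y (a + p) * Y (a + p + 1) * upper) := by
    rw [← List.range'_append_1, List.map_append, List.prod_append, List.range'_succ,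
      List.range'_succ]
    simp only [List.map_cons, List.prod_cons, mul_assoc, lower, upper]
  have lower_comm : Commute (Y (a + p + 1)) lower :=
    hY.commute_prod fun j hj ↦ by rw [List.mem_range'_1] at hj; omega
  have upper_comm : Commute (Y (a + p)) upper :=
    hY.commute_prod fun j hj ↦ by rw [List.mem_range'_1] at hj; omega
  rw [split]
  calc Y (a + p + 1) * (lower * (Y (a + p) * Y (a + p + 1) * upper))
      = lower * (Y (a + p + 1) * Y (a + p) * Y (a + p + 1)) * upper := by
        rw [← mul_assoc, lower_comm.eq]; simp only [mul_assoc]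
    _ = lower * (Y (a + p) * Y (a + p + 1)) * (Y (a + p) * upper) := by
        rw [← hY.braid]; simp only [mul_assoc]
    _ = lower * (Y (a + p) * Y (a + p + 1) * upper) * Y (a + p) := by
        rw [upper_comm.eq]; simp only [mul_assoc]

theorem isZeroOrNormalProd_mul {m i : ℕ} {w : List ℕ} (hw : IsNormalWord m w)
    (hi : i ∈ Set.Icc 1 m) : IsZeroOrNormalProd Y m (w.length + 1) (Y i * (w.map Y).prod) := by
  rw [Set.mem_Icc] at hi
  induction hw generalizing i with
  | nil => omega
  | @run_append m a r w ha har hw ih =>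
    simp only [List.map_append, List.prod_append, List.length_append, List.length_range']
    have move_past_run {j : ℕ} (hj : 1 ≤ j ∧ j ≤ m)
        (hij : Y i * ((List.range' a r).map Y).prod = ((List.range' a r).map Y).prod * Y j) :
        IsZeroOrNormalProd Y (m + 1) (r + w.length + 1)
          (Y i * (((List.range' a r).map Y).prod * (w.map Y).prod)) := by
      rw [← mul_assoc, hij, mul_assoc]
      exact (ih hj).run_mul ha har
    obtain hia | rfl | rfl | hai : i + 1 < a ∨ a = i + 1 ∨ i = a ∨ a < i := by omega
    · exact move_past_run (j := i) (by omega)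
        (hY.commute_prod fun j hj ↦ by rw [List.mem_range'_1] at hj; omega)
    · refine .inr ⟨_, .run_append (a := i) (r := r + 1) hi.1 (by omega) hw, ?_, ?_⟩
      · simp only [List.length_append, List.length_range']
        omega
      · simp [List.range'_succ]
    · obtain ⟨r, rfl⟩ := Nat.exists_eq_add_of_le' (show 1 ≤ r by omega)
      exact .inl (by rw [← mul_assoc, hY.mul_run_self, zero_mul])
    · obtain ⟨j, rfl⟩ := Nat.exists_eq_add_of_le' hi.1
      exact move_past_run (j := j) (by omega) (hY.succ_mul_run (by omega) (by omega))

theorem isZeroOrNormalProd_prod {m : ℕ} (hsupp : Y.support ⊆ Set.Icc 1 m) (l : List ℕ) :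
    IsZeroOrNormalProd Y m l.length (l.map Y).prod := by
  induction l with
  | nil => exact .inr ⟨[], isNormalWord_nil m, rfl, rfl⟩
  | cons i l ih =>
    rw [List.map_cons, List.prod_cons, List.length_cons]
    by_cases hi : Y i = 0
    · exact .inl (by rw [hi, zero_mul])
    · obtain hl | ⟨w, hw, hlen, hprod⟩ := ih
      · exact .inl (by rw [hl, mul_zero])
      · rw [← hprod, ← hlen]
        exact hY.isZeroOrNormalProd_mul hw (hsupp hi)

end Reduction

theorem wordSpan_eq_span_normalWord {k A : Type*} [CommSemiring k] [Semiring A] [Algebra k A]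
    {Y : ℕ → A} (hY : IsNilCoxeterFamily Y) {m : ℕ} (hsupp : Y.support ⊆ Set.Icc 1 m) (d : ℕ) :
    wordSpan k Y d = Submodule.span k
      ((fun w : NormalWord m ↦ (w.1.map Y).prod) '' {w | d ≤ w.1.length}) := by
  apply le_antisymm <;> refine Submodule.span_le.2 ?_
  · rintro _ ⟨l, hl, rfl⟩
    obtain h | ⟨w, hw, hlen, hprod⟩ := hY.isZeroOrNormalProd_prod hsupp l
    · simp only [h, SetLike.mem_coe, zero_mem]
    · exact Submodule.subset_span ⟨⟨w, hw⟩, hl.trans_eq hlen.symm, hprod⟩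
  · rintro _ ⟨w, hw, rfl⟩
    exact prod_mem_wordSpan Y hw

end IsNilCoxeterFamily

section WordPerm

/-- The simple reflection `s_i`, exchanging `i` and `i + 1`. -/
def simpleReflection (i : ℕ) : Perm ℕ := swap i (i + 1)

/-- The product `s_{i_1} ⋯ s_{i_d}` of simple reflections spelled by a word. -/
def wordPerm (l : List ℕ) : Perm ℕ := (l.map simpleReflection).prod

theorem wordPerm_append (l l' : List ℕ) : wordPerm (l ++ l') = wordPerm l * wordPerm l' := by
  simp [wordPerm]

theorem simpleReflection_apply_of_lt {i j : ℕ} (h : j < i) : simpleReflection i j = j :=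
  Equiv.swap_apply_of_ne_of_ne (by omega) (by omega)

theorem simpleReflection_apply_of_gt {i j : ℕ} (h : i + 1 < j) : simpleReflection i j = j :=
  Equiv.swap_apply_of_ne_of_ne (by omega) (by omega)

theorem simpleReflection_apply_self (i : ℕ) : simpleReflection i i = i + 1 :=
  Equiv.swap_apply_left _ _

theorem simpleReflection_apply_succ (i : ℕ) : simpleReflection i (i + 1) = i :=
  Equiv.swap_apply_right _ _

theorem simpleReflection_commute {i j : ℕ} (hij : i + 2 ≤ j) :
    Commute (simpleReflection i) (simpleReflection j) := by
  refine (Equiv.Perm.disjoint_swap_swap ?_).commute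
  simp
  omega

theorem simpleReflection_braid (i : ℕ) :
    simpleReflection i * simpleReflection (i + 1) * simpleReflection i =
      simpleReflection (i + 1) * simpleReflection i * simpleReflection (i + 1) := by
  unfold simpleReflection
  rw [Equiv.swap_mul_swap_mul_swap (by omega) (by omega), Equiv.swap_comm i (i + 1),
    Equiv.swap_comm (i + 1) (i + 1 + 1),
    Equiv.swap_mul_swap_mul_swap (by omega) (by omega), Equiv.swap_comm]

theorem wordPerm_apply_of_forall_lt {l : List ℕ} {j : ℕ} (hl : ∀ i ∈ l, i + 1 < j) :
    wordPerm l j = j := by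
  induction l with
  | nil => rfl
  | cons i l ih =>
    rw [List.forall_mem_cons] at hl
    rw [← List.singleton_append, wordPerm_append, Equiv.Perm.mul_apply, ih hl.2]
    simpa [wordPerm] using simpleReflection_apply_of_gt hl.1

theorem wordPerm_run_apply (a r : ℕ) : wordPerm (List.range' a r) (a + r) = a := by
  induction r with
  | zero => rfl
  | succ r ih =>
    rw [List.range'_1_concat, wordPerm_append, Equiv.Perm.mul_apply]
    simpa [wordPerm, ← add_assoc, simpleReflection_apply_succ] using ih

theorem IsNormalWord.wordPerm_apply_of_gt {m j : ℕ} {w : List ℕ} (hw : IsNormalWord m w)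
    (hj : m + 1 < j) : wordPerm w j = j :=
  wordPerm_apply_of_forall_lt fun i hi ↦ by have := (hw.mem_Icc hi).2; omega

theorem IsNormalWord.wordPerm_injective {m : ℕ} {w w' : List ℕ} (hw : IsNormalWord m w)
    (hw' : IsNormalWord m w') (h : wordPerm w = wordPerm w') : w = w' := by
  induction hw generalizing w' with
  | nil => cases hw'; rfl
  | @run_append m a r w _ har hw ih =>
    obtain _ | @⟨_, a', r', w', ha', har', hw'⟩ := hw'
    have start_eq {b s : ℕ} {u : List ℕ} (hbs : b + s = m + 2) (hu : IsNormalWord m u) :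
        wordPerm (List.range' b s ++ u) (m + 2) = b := by
      rw [wordPerm_append, Equiv.Perm.mul_apply, hu.wordPerm_apply_of_gt (by omega), ← hbs,
        wordPerm_run_apply]
    obtain rfl : a = a' := by rw [← start_eq har hw, h, start_eq har' hw']
    obtain rfl : r = r' := by omega
    rw [wordPerm_append, wordPerm_append, mul_right_inj] at h
    rw [ih hw' h]

end WordPerm

section AscentOp

variable (k : Type*) [Semiring k]

/-- The operator by which the generator `Y_i` acts in the left regular representation of the
nilCoxeter algebra of the finitary permutations of `ℕ`, extended to the free module on all
permutations: it sends `σ` to `s_i σ` if this has one inversion more, that is if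
`σ⁻¹ i < σ⁻¹ (i + 1)`, and to `0` otherwise. -/
noncomputable def ascentOp (i : ℕ) : Module.End k (Perm ℕ →₀ k) :=
  Finsupp.lsum ℕ fun σ ↦
    if σ⁻¹ i < σ⁻¹ (i + 1) then Finsupp.lsingle (simpleReflection i * σ) else 0

theorem ascentOp_single (i : ℕ) (σ : Perm ℕ) (c : k) :
    ascentOp k i (Finsupp.single σ c) =
      if σ⁻¹ i < σ⁻¹ (i + 1) then Finsupp.single (simpleReflection i * σ) c else 0 := by
  rw [ascentOp, Finsupp.lsum_single]
  split_ifs <;> rfl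

theorem simpleReflection_mul_inv_apply (i j : ℕ) (σ : Perm ℕ) :
    (simpleReflection i * σ)⁻¹ j = σ⁻¹ (simpleReflection i j) := by
  rw [mul_inv_rev, Equiv.Perm.mul_apply, simpleReflection, Equiv.swap_inv]

theorem ascentOp_sq (i : ℕ) : ascentOp k i * ascentOp k i = 0 := by
  ext σ : 2
  simp only [LinearMap.comp_apply, Finsupp.lsingle_apply, Module.End.mul_apply, ascentOp_single]
  split_ifs with h
  · rw [ascentOp_single, if_neg]
    · rfl
    · rw [simpleReflection_mul_inv_apply, simpleReflection_mul_inv_apply,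
        simpleReflection_apply_self, simpleReflection_apply_succ]
      exact h.le.not_gt
  · exact map_zero _

theorem ascentOp_commute {i j : ℕ} (hij : i + 2 ≤ j) :
    Commute (ascentOp k i) (ascentOp k j) := by
  ext σ : 2
  have h₁ : simpleReflection j i = i := simpleReflection_apply_of_lt (by omega)
  have h₂ : simpleReflection j (i + 1) = i + 1 := simpleReflection_apply_of_lt (by omega)
  have h₃ : simpleReflection i j = j := simpleReflection_apply_of_gt (by omega)
  have h₄ : simpleReflection i (j + 1) = j + 1 := simpleReflection_apply_of_gt (by omega)
  simp only [LinearMap.comp_apply, Finsupp.lsingle_apply, Module.End.mul_apply, ascentOp_single,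
    apply_ite, map_zero, simpleReflection_mul_inv_apply, h₁, h₂, h₃, h₄, ← mul_assoc,
    (simpleReflection_commute hij).eq]
  split_ifs <;> rfl

theorem ascentOp_braid (i : ℕ) :
    ascentOp k i * ascentOp k (i + 1) * ascentOp k i =
      ascentOp k (i + 1) * ascentOp k i * ascentOp k (i + 1) := by
  ext σ : 2
  have h₁ : simpleReflection (i + 1) i = i := simpleReflection_apply_of_lt (by omega)
  have h₂ : simpleReflection i (i + 1 + 1) = i + 1 + 1 := simpleReflection_apply_of_gt (by omega)
  simp only [LinearMap.comp_apply, Finsupp.lsingle_apply, Module.End.mul_apply, ascentOp_single,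
    apply_ite, map_zero, simpleReflection_mul_inv_apply, h₁, h₂, simpleReflection_apply_self,
    simpleReflection_apply_succ]
  simp only [← mul_assoc, simpleReflection_braid]
  -- Both sides ask for `σ⁻¹ i < σ⁻¹ (i + 1) < σ⁻¹ (i + 2)`, in opposite orders.
  split_ifs <;> rfl

theorem isNilCoxeterFamily_ascentOp : IsNilCoxeterFamily (ascentOp k) where
  sq := ascentOp_sq k
  braid := ascentOp_braid k
  comm := ascentOp_commute k

theorem prod_ascentOp_run_single (a r : ℕ) {σ : Perm ℕ} (c : k)
    (hσ : ∀ i < a + r, σ⁻¹ i < σ⁻¹ (a + r)) :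
    ((List.range' a r).map (ascentOp k)).prod (Finsupp.single σ c) =
      Finsupp.single (wordPerm (List.range' a r) * σ) c := by
  induction r generalizing σ with
  | zero => rfl
  | succ r ih =>
    have ascent : σ⁻¹ (a + r) < σ⁻¹ (a + r + 1) := hσ _ (by omega)
    rw [List.range'_1_concat, List.map_append, List.prod_append, wordPerm_append, mul_assoc,
      Module.End.mul_apply]
    simp only [List.map_singleton, List.prod_singleton, wordPerm, ascentOp_single, if_pos ascent]
    refine ih fun i hi ↦ ?_
    rw [simpleReflection_mul_inv_apply, simpleReflection_mul_inv_apply,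
      simpleReflection_apply_of_lt hi, simpleReflection_apply_self]
    exact hσ i (by omega)

theorem apply_lt_of_forall_le_apply_eq {α : Type*} [LinearOrder α] {σ : Perm α} {N i : α}
    (hσ : ∀ j, N ≤ j → σ j = j) (hi : i < N) : σ i < N := by
  by_contra! h
  have := σ.injective (hσ _ h)
  order

theorem IsNormalWord.prod_ascentOp_single_one {m : ℕ} {w : List ℕ} (hw : IsNormalWord m w)
    (c : k) : (w.map (ascentOp k)).prod (Finsupp.single 1 c) = Finsupp.single (wordPerm w) c := by
  induction hw with
  | nil => rfl
  | @run_append m a r w _ har hw ih =>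
    have fixed {j : ℕ} (hj : m + 2 ≤ j) : (wordPerm w)⁻¹ j = j :=
      Equiv.Perm.inv_eq_iff_eq.2 (hw.wordPerm_apply_of_gt hj).symm
    rw [List.map_append, List.prod_append, Module.End.mul_apply, ih, wordPerm_append]
    refine prod_ascentOp_run_single k a r c fun i hi ↦ ?_
    rw [har] at hi ⊢
    rw [fixed le_rfl]
    exact apply_lt_of_forall_le_apply_eq (fun j hj ↦ fixed hj) hi

theorem linearIndependent_prod_ascentOp (k : Type*) [CommSemiring k] (m : ℕ) :
    LinearIndependent k fun w : NormalWord m ↦ (w.1.map (ascentOp k)).prod := by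
  apply LinearIndependent.of_comp (LinearMap.applyₗ (Finsupp.single (1 : Perm ℕ) (1 : k)))
  have apply_eq : LinearMap.applyₗ (Finsupp.single (1 : Perm ℕ) (1 : k)) ∘
      (fun w : NormalWord m ↦ (w.1.map (ascentOp k)).prod) =
      (fun σ ↦ Finsupp.single σ 1) ∘ fun w : NormalWord m ↦ wordPerm w.1 :=
    funext fun w ↦ w.2.prod_ascentOp_single_one k 1
  rw [apply_eq]
  exact (Finsupp.linearIndependent_single_one k (Perm ℕ)).comp _ fun w w' h ↦
    Subtype.ext (w.2.wordPerm_injective w'.2 h)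

end AscentOp

section Nring

/- The module structure in `Jaug` is that of the underlying additive group, and it agrees with the
one coming from the default algebra structure on `RingQuot` only after unfolding irreducible
definitions. -/
noncomputable local instance (n : ℕ) : Algebra ℤ (Nring n) := Ring.toIntAlgebra (Nring n)

theorem Ygen_eq_mkRingHom {n i : ℕ} (hi : 1 ≤ i ∧ i + 1 ≤ n) :
    Ygen n i = RingQuot.mkRingHom (NRel n) (FreeAlgebra.ι ℤ ⟨i, hi⟩) := by
  rw [Ygen, Yf, dif_pos hi]

theorem Ygen_eq_zero {n i : ℕ} (hi : ¬(1 ≤ i ∧ i + 1 ≤ n)) : Ygen n i = 0 := by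
  rw [Ygen, Yf, dif_neg hi, map_zero]

theorem support_Ygen_subset (n : ℕ) : (Ygen n).support ⊆ Set.Icc 1 (n - 1) := by
  intro i hi
  have := not_imp_comm.1 Ygen_eq_zero hi
  rw [Set.mem_Icc]
  omega

theorem isNilCoxeterFamily_Ygen (n : ℕ) : IsNilCoxeterFamily (Ygen n) where
  sq i := by
    by_cases hi : 1 ≤ i ∧ i + 1 ≤ n
    · rw [Ygen_eq_mkRingHom hi, ← map_mul, RingQuot.mkRingHom_rel (.sq _), map_zero]
    · rw [Ygen_eq_zero hi, mul_zero]
  braid i := by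
    by_cases hi : 1 ≤ i ∧ i + 1 ≤ n
    · by_cases hi' : 1 ≤ i + 1 ∧ i + 1 + 1 ≤ n
      · simp only [Ygen_eq_mkRingHom hi, Ygen_eq_mkRingHom hi', ← map_mul]
        exact RingQuot.mkRingHom_rel (.braid _ _ rfl)
      · simp [Ygen_eq_zero hi']
    · simp [Ygen_eq_zero hi]
  comm {i j} hij := by
    by_cases hi : 1 ≤ i ∧ i + 1 ≤ n
    · by_cases hj : 1 ≤ j ∧ j + 1 ≤ n
      · simp only [Commute, SemiconjBy, Ygen_eq_mkRingHom hi, Ygen_eq_mkRingHom hj, ← map_mul]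
        exact RingQuot.mkRingHom_rel (.comm _ _ (.inl hij))
      · simp [Ygen_eq_zero hj]
    · simp [Ygen_eq_zero hi]

theorem IsNilCoxeterFamily.exists_ringHom_Ygen {A : Type*} [Ring A] {Y : ℕ → A}
    (hY : IsNilCoxeterFamily Y) (n : ℕ) :
    ∃ f : Nring n →+* A, ∀ i ∈ Set.Icc 1 (n - 1), f (Ygen n i) = Y i := by
  let lift : FreeAlgebra ℤ (NIdx n) →+* A := (FreeAlgebra.lift ℤ fun i : NIdx n ↦ Y i).toRingHom
  have lift_ι (i : NIdx n) : lift (FreeAlgebra.ι ℤ i) = Y i := FreeAlgebra.lift_ι_apply _ i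
  have respects_rel ⦃x y⦄ (h : NRel n x y) : lift x = lift y := by
    cases h with
    | sq i => simp [lift_ι, hY.sq]
    | braid i j h => simp [lift_ι, h, hY.braid]
    | comm i j h =>
      simpa [lift_ι] using h.elim (fun h ↦ (hY.comm h).eq) fun h ↦ (hY.comm h).symm.eq
  refine ⟨RingQuot.lift ⟨lift, respects_rel⟩, fun i hi ↦ ?_⟩
  rw [Set.mem_Icc] at hi
  rw [Ygen_eq_mkRingHom (by omega), RingQuot.lift_mkRingHom_apply, lift_ι]

theorem adjoin_range_Ygen (n : ℕ) : Algebra.adjoin ℤ (Set.range (Ygen n)) = ⊤ := by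
  let π : FreeAlgebra ℤ (NIdx n) →ₐ[ℤ] Nring n := (RingQuot.mkRingHom (NRel n)).toIntAlgHom
  have π_range : π.range = ⊤ :=
    (AlgHom.range_eq_top π).2 (RingQuot.mkRingHom_surjective (NRel n))
  rw [eq_top_iff, ← π_range, ← Algebra.map_top, ← FreeAlgebra.adjoin_range_ι, AlgHom.map_adjoin]
  apply Algebra.adjoin_mono
  rintro _ ⟨_, ⟨i, rfl⟩, rfl⟩
  exact ⟨i, Ygen_eq_mkRingHom i.2⟩

theorem linearIndependent_prod_Ygen (n : ℕ) :
    LinearIndependent ℤ fun w : NormalWord (n - 1) ↦ (w.1.map (Ygen n)).prod := by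
  obtain ⟨f, hf⟩ := (isNilCoxeterFamily_ascentOp ℤ).exists_ringHom_Ygen n
  apply LinearIndependent.of_comp f.toIntAlgHom.toLinearMap
  have map_eq : f.toIntAlgHom.toLinearMap ∘ (fun w : NormalWord (n - 1) ↦ (w.1.map (Ygen n)).prod) =
      fun w ↦ (w.1.map (ascentOp ℤ)).prod := by
    funext w
    simp only [Function.comp_apply, AlgHom.toLinearMap_apply, map_list_prod,
      List.map_map]
    exact congrArg List.prod (List.map_congr_left fun i hi ↦ hf i (w.2.mem_Icc hi))
  rw [map_eq]
  exact linearIndependent_prod_ascentOp ℤ (n - 1)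

theorem wordSpan_Ygen (n d : ℕ) :
    wordSpan ℤ (Ygen n) d = Submodule.span ℤ
      ((fun w : NormalWord (n - 1) ↦ (w.1.map (Ygen n)).prod) '' {w | d ≤ w.1.length}) :=
  (isNilCoxeterFamily_Ygen n).wordSpan_eq_span_normalWord (support_Ygen_subset n) d

/-- The basis of `N(n)` formed by the products `Y_w` over the normal words `w`. -/
noncomputable def normalBasis (n : ℕ) : Module.Basis (NormalWord (n - 1)) ℤ (Nring n) :=
  .mk (linearIndependent_prod_Ygen n) <| by
    rw [← wordSpan_zero (adjoin_range_Ygen n) (k := ℤ), wordSpan_Ygen]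
    exact Submodule.span_mono (Set.image_subset_range _ _)

theorem Jaug_eq_wordSpan (n : ℕ) : Jaug n = wordSpan ℤ (Ygen n) 1 := by
  apply le_antisymm <;> refine Submodule.span_le.2 ?_
  · rintro _ ⟨x, y, i, -, -, rfl⟩
    have mem_zero (z : Nring n) : z ∈ wordSpan ℤ (Ygen n) 0 :=
      wordSpan_zero (adjoin_range_Ygen n) ▸ Submodule.mem_top
    have mem_one : Ygen n i ∈ wordSpan ℤ (Ygen n) 1 := by
      simpa using prod_mem_wordSpan (k := ℤ) (Ygen n) (l := [i]) le_rfl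
    simpa only [wordSpan_mul, zero_add, add_zero, SetLike.mem_coe] using
      Submodule.mul_mem_mul (Submodule.mul_mem_mul (mem_zero x) mem_one) (mem_zero y)
  · rintro _ ⟨_ | ⟨i, l⟩, hl, rfl⟩
    · simp at hl
    · by_cases hi : 1 ≤ i ∧ i + 1 ≤ n
      · exact Submodule.subset_span ⟨1, (l.map (Ygen n)).prod, i, hi.1, hi.2, by simp⟩
      · simp only [List.map_cons, List.prod_cons, Ygen_eq_zero hi, zero_mul, SetLike.mem_coe,
          zero_mem]

theorem Jaug_pow_succ (n m : ℕ) :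
    Jaug n ^ (m + 1) = Submodule.span ℤ (normalBasis n '' {w | m + 1 ≤ w.1.length}) := by
  rw [Jaug_eq_wordSpan, wordSpan_one_pow_succ, wordSpan_Ygen, normalBasis, Module.Basis.coe_mk]

theorem Jaug_pow_zero (n : ℕ) :
    Jaug n ^ 0 = Submodule.span ℤ (normalBasis n '' {⟨[], isNormalWord_nil _⟩}) := by
  rw [pow_zero, Submodule.one_eq_span, Set.image_singleton, normalBasis, Module.Basis.mk_apply,
    List.map_nil, List.prod_nil]

end Nring

end NilCoxeter

/-- `J^{n(n-1)/2 + 1} = 0`, and every quotient `N(n)/J^m` is a free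
ℤ-module. -/
theorem Nring_augmentation_ideal_nilpotent_and_quotients_free (n : ℕ) (hn : 2 ≤ n) :
    Jaug n ^ (n * (n - 1) / 2 + 1) = ⊥ ∧
    ∀ m : ℕ, Module.Free ℤ (Nring n ⧸ (Jaug n ^ m)) := by
  constructor
  · rw [NilCoxeter.Jaug_pow_succ, Submodule.span_eq_bot]
    rintro _ ⟨w, hw, rfl⟩
    have length_le := w.2.length_le
    rw [Nat.sub_add_cancel (by omega)] at length_le
    exact absurd hw length_le.not_gt
  · rintro (_ | m)
    · rw [NilCoxeter.Jaug_pow_zero]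
      exact NilCoxeter.free_quotient_span_image _ _
    · rw [NilCoxeter.Jaug_pow_succ]
      exact NilCoxeter.free_quotient_span_image _ _
end
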